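/- Let N ≥ 2, 1 < p < N and p − 1 < q < q_c, and let u be a strong solution of (E) on ℝ^N ∖ {0} with u ≥ 0 on ℝ^N ∖ {0}. Then u is radial (u(x) depends only on |x|) and at least one of the following holds: (i) there exists M ≥ 0 with u(x) = M for all x ≠ 0; (ii) there exist k > 0 and M ≥ 0 such that u(x) = ∫_{|x|}^∞ s^{(1−N)/(p−1)} ( b^{−1} s^{(q+1−p)b/(p−1)} + k^{p−1−q} )^{−1/(q+1−p)} ds + M for all x ≠ 0; (iii) there exists M ≥ 0 such that u(x) = λ_{N,p,q} |x|^{−β_q} + M for all x ≠ 0. -/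

import Mathlib

open Metric Set Filter Topology MeasureTheory

/-- The vector field `x ↦ |∇u(x)|^{p-2} ∇u(x)`. -/
noncomputable def pGradField {N : ℕ} (p : ℝ) (u : EuclideanSpace ℝ (Fin N) → ℝ)
    (x : EuclideanSpace ℝ (Fin N)) : EuclideanSpace ℝ (Fin N) :=
  ‖gradient u x‖ ^ (p - 2) • gradient u x

/-- A strong solution of `(E) : -Δ_p u + |∇u|^q = 0` on an open set `G ⊆ ℝ^N`. -/
def IsStrongSolution {N : ℕ} (p q : ℝ) (G : Set (EuclideanSpace ℝ (Fin N)))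
    (u : EuclideanSpace ℝ (Fin N) → ℝ) : Prop :=
  ContDiffOn ℝ 1 u G ∧
  ContDiffOn ℝ 3 u {x | x ∈ G ∧ gradient u x ≠ 0} ∧
  ∀ x ∈ G, DifferentiableAt ℝ (pGradField p u) x ∧
    LinearMap.trace ℝ (EuclideanSpace ℝ (Fin N))
      (fderiv ℝ (pGradField p u) x : EuclideanSpace ℝ (Fin N) →ₗ[ℝ] EuclideanSpace ℝ (Fin N))
      = ‖gradient u x‖ ^ q

/-- Euclidean space of dimension `N`. -/
abbrev Eu (N : ℕ) := EuclideanSpace ℝ (Fin N)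

/-- The trace of an endomorphism of Euclidean space. -/
noncomputable def tr {N : ℕ} (A : Eu N →L[ℝ] Eu N) : ℝ := LinearMap.trace ℝ (Eu N) (A : Eu N →ₗ[ℝ] Eu N)

/-- The `p`-Laplacian, as the pointwise divergence of `pGradField`. -/
noncomputable def pLaplace {N : ℕ} (p : ℝ) (u : Eu N → ℝ) (x : Eu N) : ℝ :=
  tr (fderiv ℝ (pGradField p u) x)

section Basics

variable {N : ℕ}

lemma tr_eq_sum (A : Eu N →L[ℝ] Eu N) (b : OrthonormalBasis (Fin N) ℝ (Eu N)) :
    tr A = ∑ i, inner ℝ (b i) (A (b i)) :=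
  LinearMap.trace_eq_sum_inner _ b

@[simp] lemma tr_add (A B : Eu N →L[ℝ] Eu N) : tr (A + B) = tr A + tr B := by simp [tr]
@[simp] lemma tr_sub (A B : Eu N →L[ℝ] Eu N) : tr (A - B) = tr A - tr B := by simp [tr]
@[simp] lemma tr_smul (c : ℝ) (A : Eu N →L[ℝ] Eu N) : tr (c • A) = c * tr A := by simp [tr]
@[simp] lemma tr_neg (A : Eu N →L[ℝ] Eu N) : tr (-A) = - tr A := by simp [tr]

lemma tr_id : tr (ContinuousLinearMap.id ℝ (Eu N)) = N := by
  simp [tr]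

lemma tr_smulRight (f : Eu N →L[ℝ] ℝ) (v : Eu N) : tr (f.smulRight v) = f v := by
  have b := EuclideanSpace.basisFun (Fin N) ℝ
  rw [tr_eq_sum _ b]
  conv_rhs => rw [← b.sum_repr' v, map_sum]
  refine Finset.sum_congr rfl fun i _ => ?_
  simp [inner_smul_right, mul_comm]

/-- The trace as a continuous linear functional. -/
noncomputable def trL : (Eu N →L[ℝ] Eu N) →L[ℝ] ℝ :=
  LinearMap.toContinuousLinearMap
    { toFun := tr
      map_add' := tr_add
      map_smul' := fun c A => by simp }

@[simp] lemma trL_apply (A : Eu N →L[ℝ] Eu N) : trL A = tr A := rfl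

lemma exists_basis_first {n : Eu N} (hn : ‖n‖ = 1) :
    ∃ (b : OrthonormalBasis (Fin N) ℝ (Eu N)) (i₀ : Fin N), b i₀ = n := by
  have hN : 0 < N := by
    rcases Nat.eq_zero_or_pos N with h | h
    · subst h
      have : n = 0 := Subsingleton.elim _ _
      simp [this] at hn
    · exact h
  have := Orthonormal.exists_orthonormalBasis_extension_of_card_eq (𝕜 := ℝ) (E := Eu N)
    (ι := Fin N) (by simp) (v := fun _ => n) (s := {⟨0, hN⟩}) (by
      rw [orthonormal_iff_ite]
      rintro ⟨i, hi⟩ ⟨j, hj⟩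
      have hi' : i = ⟨0, hN⟩ := hi
      have hj' : j = ⟨0, hN⟩ := hj
      subst hi' hj'
      simp [hn])
  obtain ⟨b, hb⟩ := this
  exact ⟨b, ⟨0, hN⟩, hb _ rfl⟩

lemma gradient_eq_sum (u : Eu N → ℝ) (b : OrthonormalBasis (Fin N) ℝ (Eu N)) (x : Eu N) :
    gradient u x = ∑ i, (fderiv ℝ u x (b i)) • b i := by
  rw [← b.sum_repr' (gradient u x)]
  refine Finset.sum_congr rfl fun i _ => ?_
  rw [real_inner_comm, inner_gradient_left]

lemma contDiffAt_gradient {u : Eu N → ℝ} {x : Eu N} {m n : WithTop ℕ∞} (h : ContDiffAt ℝ n u x)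
    (hmn : m + 1 ≤ n) : ContDiffAt ℝ m (gradient u) x := by
  have : gradient u = fun x => ∑ i, (fderiv ℝ u x (EuclideanSpace.basisFun (Fin N) ℝ i)) •
      EuclideanSpace.basisFun (Fin N) ℝ i := by
    ext1 x; exact gradient_eq_sum u _ x
  rw [this]
  refine ContDiffAt.sum fun i _ => ?_
  exact ((h.fderiv_right hmn).clm_apply contDiffAt_const).smul contDiffAt_const

lemma differentiableAt_gradient {u : Eu N → ℝ} {x : Eu N} (h : ContDiffAt ℝ 2 u x) :
    DifferentiableAt ℝ (gradient u) x :=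
  (contDiffAt_gradient (m := 1) h (by norm_num)).differentiableAt (by norm_num)

lemma hessian_apply {u : Eu N → ℝ} {x : Eu N} (h : ContDiffAt ℝ 2 u x) (v w : Eu N) :
    inner ℝ (fderiv ℝ (gradient u) x v) w = fderiv ℝ (fderiv ℝ u) x v w := by
  have h1 : (fun y => inner ℝ (gradient u y) w) = fun y => fderiv ℝ u y w := by
    ext y; exact inner_gradient_left
  have h2 := ((differentiableAt_gradient h).hasFDerivAt.inner ℝ (hasFDerivAt_const w x)).fderiv
  have h3 : DifferentiableAt ℝ (fderiv ℝ u) x :=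
    (h.fderiv_right (m := 1) (by norm_num)).differentiableAt (by norm_num)
  have h4 := (h3.hasFDerivAt.clm_apply (hasFDerivAt_const w x)).fderiv
  rw [h1, h4] at h2
  have := congrArg (fun L => L v) h2
  simpa using this.symm

lemma hessian_symm {u : Eu N → ℝ} {x : Eu N} (h : ContDiffAt ℝ 2 u x) (v w : Eu N) :
    inner ℝ (fderiv ℝ (gradient u) x v) w = inner ℝ (fderiv ℝ (gradient u) x w) v := by
  rw [hessian_apply h, hessian_apply h]
  exact (h.isSymmSndFDerivAt (by simp)).eq v w

lemma hasFDerivAt_norm_rpow_smul {F : Eu N → Eu N} {H : Eu N →L[ℝ] Eu N} {x : Eu N}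
    (hF : HasFDerivAt F H x) (h0 : F x ≠ 0) (s : ℝ) :
    HasFDerivAt (fun y => ‖F y‖ ^ s • F y)
      (‖F x‖ ^ s • (H + (s / ‖F x‖ ^ 2) • ((innerSL ℝ (F x)).comp H).smulRight (F x))) x := by
  have hpos : 0 < ‖F x‖ := norm_pos_iff.2 h0
  have h1 : HasFDerivAt (fun y => (‖F y‖ ^ 2) ^ (s / 2)) _ x :=
    (hF.norm_sq).rpow_const (p := s / 2) (Or.inl (by positivity))
  have h2 : (fun y => (‖F y‖ ^ 2) ^ (s / 2)) = fun y => ‖F y‖ ^ s := by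
    ext y
    rw [← Real.rpow_natCast, ← Real.rpow_mul (norm_nonneg _)]
    congr 1; push_cast; ring
  rw [h2] at h1
  refine (h1.smul hF).congr_fderiv ?_
  ext1 v
  have h3 : (‖F x‖ ^ 2) ^ (s / 2 - 1) = ‖F x‖ ^ s / ‖F x‖ ^ 2 := by
    rw [Real.rpow_sub_one (by positivity), ← Real.rpow_natCast, ← Real.rpow_mul (norm_nonneg _)]
    congr 2; push_cast; ring
  simp only [h3, smul_apply, add_apply,
    ContinuousLinearMap.smulRight_apply, ContinuousLinearMap.comp_apply, innerSL_apply_apply, smul_eq_mul,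
    smul_add, smul_smul, nsmul_eq_mul]
  congr 2
  push_cast
  ring

lemma pLaplace_eq {p : ℝ} {u : Eu N → ℝ} {x : Eu N} (h : ContDiffAt ℝ 2 u x)
    (h0 : gradient u x ≠ 0) :
    pLaplace p u x = ‖gradient u x‖ ^ (p - 2) * (tr (fderiv ℝ (gradient u) x) +
      (p - 2) / ‖gradient u x‖ ^ 2 *
        inner ℝ (gradient u x) (fderiv ℝ (gradient u) x (gradient u x))) := by
  have := (hasFDerivAt_norm_rpow_smul (differentiableAt_gradient h).hasFDerivAt h0 (p - 2)).fderiv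
  unfold pLaplace
  have h2 : pGradField p u = fun y => ‖gradient u y‖ ^ (p - 2) • gradient u y := rfl
  rw [h2, this]
  simp [tr_smulRight]
  ring

lemma gradient_const_mul (c : ℝ) (u : Eu N → ℝ) (x : Eu N) :
    gradient (fun y => c * u y) x = c • gradient u x := by
  apply ext_inner_right ℝ
  intro v
  rw [inner_gradient_left, inner_smul_left, inner_gradient_left]
  have : (fun y => c * u y) = c • u := rfl
  rw [this, fderiv_const_smul_field]
  simp

lemma gradient_neg' (u : Eu N → ℝ) (x : Eu N) :
    gradient (fun y => - u y) x = - gradient u x := by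
  have := gradient_const_mul (-1) u x
  simpa using this

lemma pGradField_const_mul (p : ℝ) {c : ℝ} (hc : 0 < c) (u : Eu N → ℝ) :
    pGradField p (fun y => c * u y) = c ^ (p - 1) • pGradField p u := by
  ext1 x
  simp only [pGradField, gradient_const_mul, norm_smul, Real.norm_eq_abs, abs_of_pos hc,
    Pi.smul_apply, smul_smul]
  congr 1
  rw [Real.mul_rpow hc.le (norm_nonneg _), show p - 1 = (p - 2) + 1 by ring,
    Real.rpow_add_one hc.ne']
  ring

lemma pGradField_neg (p : ℝ) (u : Eu N → ℝ) :
    pGradField p (fun y => - u y) = - pGradField p u := by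
  ext1 x
  simp [pGradField, gradient_neg']

lemma pLaplace_const_mul (p : ℝ) {c : ℝ} (hc : 0 < c) (u : Eu N → ℝ) (x : Eu N) :
    pLaplace p (fun y => c * u y) x = c ^ (p - 1) * pLaplace p u x := by
  simp only [pLaplace, pGradField_const_mul p hc, fderiv_const_smul_field, Pi.smul_apply, tr_smul]

lemma pLaplace_neg (p : ℝ) (u : Eu N → ℝ) (x : Eu N) :
    pLaplace p (fun y => - u y) x = - pLaplace p u x := by
  simp only [pLaplace, pGradField_neg, fderiv_neg, tr_neg]

lemma gradient_comp_add (u : Eu N → ℝ) (a x : Eu N) :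
    gradient (fun y => u (y + a)) x = gradient u (x + a) := by
  unfold gradient
  rw [fderiv_comp_add_right]

lemma pLaplace_comp_add (p : ℝ) (u : Eu N → ℝ) (a x : Eu N) :
    pLaplace p (fun y => u (y + a)) x = pLaplace p u (x + a) := by
  have : pGradField p (fun y => u (y + a)) = fun y => pGradField p u (y + a) := by
    ext1 y; simp only [pGradField, gradient_comp_add]
  simp only [pLaplace, this, fderiv_comp_add_right]

lemma gradient_add_const (u : Eu N → ℝ) (c : ℝ) (x : Eu N) :
    gradient (fun y => u y + c) x = gradient u x := by
  unfold gradient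
  rw [fderiv_add_const]

lemma pGradField_add_const (p : ℝ) (u : Eu N → ℝ) (c : ℝ) :
    pGradField p (fun y => u y + c) = pGradField p u := by
  ext1 x
  simp only [pGradField, gradient_add_const]

lemma gradient_comp_isometry (L : Eu N ≃ₗᵢ[ℝ] Eu N) (u : Eu N → ℝ) (x : Eu N) :
    gradient (fun y => u (L y)) x = L.symm (gradient u (L x)) := by
  apply ext_inner_right ℝ
  intro v
  rw [inner_gradient_left, LinearIsometryEquiv.inner_map_eq_flip, L.symm_symm, inner_gradient_left]
  have := L.toContinuousLinearEquiv.comp_right_fderiv (f := u) (x := x)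
  have h2 : (fun y => u (L y)) = u ∘ L.toContinuousLinearEquiv := rfl
  rw [h2, this]; rfl

lemma pLaplace_comp_isometry (p : ℝ) (L : Eu N ≃ₗᵢ[ℝ] Eu N) (u : Eu N → ℝ) (x : Eu N) :
    pLaplace p (fun y => u (L y)) x = pLaplace p u (L x) := by
  have h1 : pGradField p (fun y => u (L y)) =
      L.symm.toContinuousLinearEquiv ∘ (pGradField p u ∘ L.toContinuousLinearEquiv) := by
    ext1 y
    simp [pGradField, gradient_comp_isometry]
  unfold pLaplace
  rw [h1, ContinuousLinearEquiv.comp_fderiv, ContinuousLinearEquiv.comp_right_fderiv]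
  unfold tr
  have := LinearMap.trace_conj' (fderiv ℝ (pGradField p u) (L x) : Eu N →ₗ[ℝ] Eu N)
    L.symm.toLinearEquiv
  rw [← this]
  rfl

/-- If the derivative of a one-variable function at a local maximum is differentiable there,
its second derivative is nonpositive. -/
lemma second_deriv_nonpos_of_isLocalMax {f f' : ℝ → ℝ} {c : ℝ}
    (hf : ∀ᶠ t in 𝓝 (0 : ℝ), HasDerivAt f (f' t) t) (hf' : HasDerivAt f' c 0)
    (hmax : IsLocalMax f 0) : c ≤ 0 := by
  by_contra! hc
  have h0 : f' 0 = 0 := hmax.hasDerivAt_eq_zero hf.self_of_nhds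
  have h1 : ∀ᶠ t in 𝓝[≠] (0 : ℝ), 0 < slope f' 0 t :=
    (hasDerivAt_iff_tendsto_slope.1 hf').eventually (lt_mem_nhds hc)
  rw [eventually_nhdsWithin_iff] at h1
  obtain ⟨ε, hε, hball⟩ := Metric.eventually_nhds_iff.1 (h1.and (hf.and hmax))
  have hmem : ∀ t ∈ Icc (0 : ℝ) (ε / 2), dist t 0 < ε := by
    intro t ht
    rw [Real.dist_0_eq_abs, abs_of_nonneg ht.1]
    linarith [ht.2]
  have hmono : StrictMonoOn f (Icc 0 (ε / 2)) := by
    refine strictMonoOn_of_deriv_pos (convex_Icc _ _)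
      (fun t ht => ((hball (hmem t ht)).2.1.continuousAt.continuousWithinAt)) ?_
    intro t ht
    rw [interior_Icc] at ht
    have ht' := hball (hmem t ⟨ht.1.le, ht.2.le⟩)
    rw [ht'.2.1.deriv]
    have := ht'.1 (by simpa using ht.1.ne')
    rw [slope_def_field, h0, sub_zero, sub_zero] at this
    exact (div_pos_iff_of_pos_right ht.1).1 this
  have h2 := hmono (left_mem_Icc.2 (by linarith)) (right_mem_Icc.2 (by linarith))
    (by linarith : (0 : ℝ) < ε / 2)
  have h3 := (hball (hmem (ε / 2) (right_mem_Icc.2 (by linarith)))).2.2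
  linarith

/-- The Hessian is negative semidefinite at a local maximum. -/
lemma hessian_nonpos_of_isLocalMax {h : Eu N → ℝ} {x : Eu N} (hh : ContDiffAt ℝ 2 h x)
    (hmax : IsLocalMax h x) (v : Eu N) : inner ℝ (fderiv ℝ (gradient h) x v) v ≤ 0 := by
  have hline : ∀ t : ℝ, HasDerivAt (fun t : ℝ => x + t • v) v t := fun t => by
    simpa using ((hasDerivAt_id t).smul_const v).const_add x
  have hc : Tendsto (fun t : ℝ => x + t • v) (𝓝 0) (𝓝 x) := by
    have := (hline 0).continuousAt.tendsto
    simpa using this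
  refine second_deriv_nonpos_of_isLocalMax (f := fun t => h (x + t • v))
    (f' := fun t => inner ℝ (gradient h (x + t • v)) v) ?_ ?_ ?_
  · have : ∀ᶠ y in 𝓝 x, ContDiffAt ℝ 2 h y := hh.eventually (by simp)
    filter_upwards [hc.eventually this] with t ht
    have h1 := (ht.differentiableAt (by norm_num)).hasFDerivAt.comp_hasDerivAt t (hline t)
    rw [inner_gradient_left]
    exact h1
  · have h1 : HasFDerivAt (gradient h) (fderiv ℝ (gradient h) x) (x + (0 : ℝ) • v) := by
      simpa using (differentiableAt_gradient hh).hasFDerivAt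
    have h2 := h1.comp_hasDerivAt (0 : ℝ) (hline 0)
    have := h2.inner ℝ (hasDerivAt_const (0 : ℝ) v)
    simpa using this
  · have := hc.eventually hmax
    simpa [IsLocalMax, IsMaxFilter] using this

lemma trace_le_of_nonpos {H : Eu N →L[ℝ] Eu N} (hH : ∀ v, inner ℝ (H v) v ≤ 0) {p : ℝ} (hp : 1 < p)
    {G : Eu N} (hG : G ≠ 0) :
    tr H + (p - 2) / ‖G‖ ^ 2 * inner ℝ G (H G) ≤ 0 := by
  have hpos : 0 < ‖G‖ := norm_pos_iff.2 hG
  obtain ⟨b, i₀, hb⟩ := exists_basis_first (n := ‖G‖⁻¹ • G) (by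
    rw [norm_smul, norm_inv, norm_norm, inv_mul_cancel₀ hpos.ne'])
  have h1 : inner ℝ (b i₀) (H (b i₀)) = inner ℝ G (H G) / ‖G‖ ^ 2 := by
    rw [hb, map_smul, inner_smul_left, inner_smul_right]
    simp; field_simp
  have h2 : tr H ≤ inner ℝ (b i₀) (H (b i₀)) := by
    rw [tr_eq_sum H b, ← Finset.add_sum_erase _ _ (Finset.mem_univ i₀)]
    have : ∑ i ∈ Finset.univ.erase i₀, inner ℝ (b i) (H (b i)) ≤ 0 :=
      Finset.sum_nonpos fun i _ => by rw [real_inner_comm]; exact hH _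
    linarith
  have h3 : inner ℝ (b i₀) (H (b i₀)) ≤ 0 := by rw [real_inner_comm]; exact hH _
  have h4 : (p - 2) / ‖G‖ ^ 2 * inner ℝ G (H G) = (p - 2) * inner ℝ (b i₀) (H (b i₀)) := by
    rw [h1]; ring
  rw [h4]
  nlinarith

/-- Comparison of `p`-Laplacians at a touching point with nonzero gradient. -/
lemma pLaplace_le_of_isLocalMax {p : ℝ} (hp : 1 < p) {u w : Eu N → ℝ} {x : Eu N}
    (hu : ContDiffAt ℝ 2 u x) (hw : ContDiffAt ℝ 2 w x) (hmax : IsLocalMax (fun y => u y - w y) x)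
    (hgrad : gradient u x = gradient w x) (h0 : gradient w x ≠ 0) :
    pLaplace p u x ≤ pLaplace p w x := by
  rw [pLaplace_eq hu (hgrad ▸ h0), pLaplace_eq hw h0, hgrad]
  have hH := hessian_nonpos_of_isLocalMax (hu.sub hw) hmax
  have h1 : fderiv ℝ (gradient (fun y => u y - w y)) x =
      fderiv ℝ (gradient u) x - fderiv ℝ (gradient w) x := by
    rw [← fderiv_fun_sub (differentiableAt_gradient hu) (differentiableAt_gradient hw)]
    apply Filter.EventuallyEq.fderiv_eq
    filter_upwards [hu.eventually (by simp), hw.eventually (by simp)] with y h1 h2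
    apply ext_inner_right ℝ
    intro v
    rw [inner_sub_left, inner_gradient_left, inner_gradient_left, inner_gradient_left,
      fderiv_fun_sub (h1.differentiableAt (by norm_num)) (h2.differentiableAt (by norm_num))]
    rfl
  rw [h1] at hH
  have := trace_le_of_nonpos hH hp h0
  simp only [tr_sub, sub_apply, inner_sub_right] at this
  apply mul_le_mul_of_nonneg_left _ (by positivity)
  linarith [mul_sub ((p - 2) / ‖gradient w x‖ ^ 2)
    (inner ℝ (gradient w x) (fderiv ℝ (gradient u) x (gradient w x)))
    (inner ℝ (gradient w x) (fderiv ℝ (gradient w) x (gradient w x)))]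

lemma gradient_eq_of_isLocalMax {u w : Eu N → ℝ} {x : Eu N}
    (hu : DifferentiableAt ℝ u x) (hw : DifferentiableAt ℝ w x)
    (hmax : IsLocalMax (fun y => u y - w y) x) : gradient u x = gradient w x := by
  have := hmax.fderiv_eq_zero
  rw [fderiv_fun_sub hu hw, sub_eq_zero] at this
  simp [gradient, this]

lemma gradient_eq_zero_of_isLocalMax {u : Eu N → ℝ} {x : Eu N}
    (hmax : IsLocalMax u x) : gradient u x = 0 := by
  simp [gradient, hmax.fderiv_eq_zero]

end Basics

section Bernstein

variable {N : ℕ}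

lemma sum_norm_sq_ge {H : Eu N →L[ℝ] Eu N} (hs : ∀ v w, inner ℝ (H v) w = inner ℝ (H w) v)
    (b : OrthonormalBasis (Fin N) ℝ (Eu N)) (i₀ : Fin N) (hN : 2 ≤ N) :
    2 * ‖H (b i₀)‖ ^ 2 - inner ℝ (H (b i₀)) (b i₀) ^ 2 +
      (tr H - inner ℝ (H (b i₀)) (b i₀)) ^ 2 / ((N : ℝ) - 1) ≤ ∑ i, ‖H (b i)‖ ^ 2 := by
  have hpars : ∀ v : Eu N, ‖v‖ ^ 2 = ∑ k, inner ℝ v (b k) ^ 2 := fun v => by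
    rw [← b.sum_sq_norm_inner_left v]
    exact Finset.sum_congr rfl fun i _ => by simp
  have hN1 : (0 : ℝ) < N - 1 := by
    have : (2 : ℝ) ≤ N := by exact_mod_cast hN
    linarith
  have h1 : ∀ i ∈ Finset.univ.erase i₀,
      inner ℝ (H (b i₀)) (b i) ^ 2 + inner ℝ (H (b i)) (b i) ^ 2 ≤ ‖H (b i)‖ ^ 2 := by
    intro i hi
    have hne : i₀ ≠ i := (Finset.ne_of_mem_erase hi).symm
    rw [hpars (H (b i)), hs (b i₀) (b i), ← Finset.sum_pair (f := fun k => inner ℝ (H (b i)) (b k) ^ 2) hne]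
    exact Finset.sum_le_sum_of_subset_of_nonneg (Finset.subset_univ _) fun _ _ _ => sq_nonneg _
  have h2 := Finset.sum_le_sum h1
  rw [Finset.sum_add_distrib] at h2
  have h3 : ∑ i ∈ Finset.univ.erase i₀, inner ℝ (H (b i₀)) (b i) ^ 2 =
      ‖H (b i₀)‖ ^ 2 - inner ℝ (H (b i₀)) (b i₀) ^ 2 := by
    rw [hpars (H (b i₀)), ← Finset.add_sum_erase _ _ (Finset.mem_univ i₀)]; ring
  have h4 : tr H - inner ℝ (H (b i₀)) (b i₀) =
      ∑ i ∈ Finset.univ.erase i₀, inner ℝ (H (b i)) (b i) := by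
    rw [tr_eq_sum H b, ← Finset.add_sum_erase _ _ (Finset.mem_univ i₀), real_inner_comm]
    simp only [add_sub_cancel_left]
    exact Finset.sum_congr rfl fun i _ => real_inner_comm _ _
  have h5 := sq_sum_le_card_mul_sum_sq (s := Finset.univ.erase i₀)
    (f := fun i => inner ℝ (H (b i)) (b i))
  rw [← h4, Finset.card_erase_of_mem (Finset.mem_univ _), Finset.card_univ, Fintype.card_fin,
    Nat.cast_sub (by omega), Nat.cast_one] at h5
  have h6 := (div_le_iff₀' hN1).2 h5
  have h7 : ∑ i, ‖H (b i)‖ ^ 2 = ‖H (b i₀)‖ ^ 2 + ∑ i ∈ Finset.univ.erase i₀, ‖H (b i)‖ ^ 2 :=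
    (Finset.add_sum_erase _ _ (Finset.mem_univ i₀)).symm
  linarith

set_option maxHeartbeats 800000 in
/-- The pointwise inequality behind the Bernstein estimate. -/
lemma bernstein_algebra (hN : 2 ≤ N) {p m y u D : ℝ} (hp : 1 < p) (hu : 0 < u) {G ε : Eu N} (hG : G ≠ 0)
    {H : Eu N →L[ℝ] Eu N} {B : Eu N →L[ℝ] Eu N →L[ℝ] Eu N}
    (hs : ∀ v w, inner ℝ (H v) w = inner ℝ (H w) v)
    (hB1 : ∀ a c, B a c = B c a) (hB2 : ∀ a c d, inner ℝ (B a c) d = inner ℝ (B a d) c)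
    (hE : ‖G‖ ^ 2 * tr H + (p - 2) * inner ℝ (H G) G = ‖G‖ ^ 2 * y)
    (hE' : 2 * inner ℝ (H G) G * tr H + ‖G‖ ^ 2 * tr (B G) +
      (p - 2) * (2 * ‖H G‖ ^ 2 + inner ℝ (B G G) G) = 2 * m * y * inner ℝ (H G) G)
    (h1 : H G = ‖G‖ ^ 2 • (u⁻¹ • G + ε))
    (h2 : ∀ e, ‖e‖ = 1 → (inner ℝ (B e e) G + ‖H e‖ ^ 2) / ‖G‖ ^ 2
      - 2 * inner ℝ (H e) G ^ 2 / (‖G‖ ^ 2) ^ 2 -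
      (inner ℝ (H e) e / u - inner ℝ G e ^ 2 / u ^ 2) ≤ D) :
    (y - (p - 1) * (‖G‖ ^ 2 / u + inner ℝ G ε)) ^ 2 / ((N : ℝ) - 1) +
      (2 * m - 3) * y * (‖G‖ ^ 2 / u) ≤
      (N + p - 2) * D * ‖G‖ ^ 2 + (p - 2) * (‖G‖ ^ 2 * ‖ε‖ ^ 2 - inner ℝ G ε ^ 2)
        - (2 * m - 2) * y * inner ℝ G ε
        + (p - 1) * (2 * (‖G‖ ^ 2 / u) * inner ℝ G ε + inner ℝ G ε ^ 2) := by
  have hpos : 0 < ‖G‖ := norm_pos_iff.2 hG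
  obtain ⟨b, i₀, hb⟩ := exists_basis_first (n := ‖G‖⁻¹ • G) (by
    rw [norm_smul, norm_inv, norm_norm, inv_mul_cancel₀ hpos.ne'])
  have hpars : ∀ v : Eu N, ‖v‖ ^ 2 = ∑ k, inner ℝ v (b k) ^ 2 := fun v => by
    rw [← b.sum_sq_norm_inner_left v]
    exact Finset.sum_congr rfl fun i _ => by simp
  have hS := sum_norm_sq_ge hs b i₀ hN
  set z := ‖G‖ ^ 2 with hz
  have hzpos : 0 < z := by positivity
  set F : Eu N → ℝ := fun e => (inner ℝ (B e e) G + ‖H e‖ ^ 2) / z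
      - 2 * inner ℝ (H e) G ^ 2 / z ^ 2 - (inner ℝ (H e) e / u - inner ℝ G e ^ 2 / u ^ 2) with hF
  have hsum : ∑ i, F (b i) + (p - 2) * F (b i₀) ≤ (N + p - 2) * D := by
    have h3 : ∑ i ∈ Finset.univ.erase i₀, F (b i) ≤ ∑ i ∈ Finset.univ.erase i₀, D :=
      Finset.sum_le_sum fun i _ => h2 _ (b.norm_eq_one i)
    rw [Finset.sum_const, Finset.card_erase_of_mem (Finset.mem_univ _), Finset.card_univ,
      Fintype.card_fin, nsmul_eq_mul, Nat.cast_sub (by omega), Nat.cast_one] at h3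
    rw [← Finset.add_sum_erase _ _ (Finset.mem_univ i₀)]
    have h4 := mul_le_mul_of_nonneg_left (h2 _ (b.norm_eq_one i₀)) (by linarith : 0 ≤ p - 1)
    change (p - 1) * F (b i₀) ≤ _ at h4
    nlinarith
  have hsumF : ∑ i, F (b i) = (tr (B G) + ∑ i, ‖H (b i)‖ ^ 2) / z - 2 * ‖H G‖ ^ 2 / z ^ 2
      - (tr H / u - z / u ^ 2) := by
    have e1 : tr (B G) = ∑ i, inner ℝ (B (b i) (b i)) G := by
      rw [tr_eq_sum _ b]
      refine Finset.sum_congr rfl fun i _ => ?_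
      rw [real_inner_comm, hB1, hB2]
    have e2 : ‖H G‖ ^ 2 = ∑ i, inner ℝ (H (b i)) G ^ 2 := by
      rw [hpars]; exact Finset.sum_congr rfl fun i _ => by rw [hs]
    have e3 : tr H = ∑ i, inner ℝ (H (b i)) (b i) := by
      rw [tr_eq_sum H b]; exact Finset.sum_congr rfl fun i _ => real_inner_comm _ _
    have e4 : z = ∑ i, inner ℝ G (b i) ^ 2 := hpars G
    rw [e1, e2, e3]
    conv_rhs => rw [show z / u ^ 2 = (∑ i, inner ℝ G (b i) ^ 2) / u ^ 2 by rw [← e4]]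
    simp only [hF, Finset.sum_sub_distrib, Finset.sum_add_distrib, Finset.mul_sum, Finset.sum_div, add_div]
  have n1 : inner ℝ (H (b i₀)) (b i₀) = inner ℝ (H G) G / z := by
    rw [hb, map_smul, inner_smul_left, inner_smul_right]
    simp only [conj_trivial, hz]; field_simp
  have n2 : ‖H (b i₀)‖ ^ 2 = ‖H G‖ ^ 2 / z := by
    rw [hb, map_smul, norm_smul, norm_inv, norm_norm, hz]; field_simp
  have n3 : F (b i₀) = (inner ℝ (B G G) G + ‖H G‖ ^ 2) / z ^ 2 - 2 * inner ℝ (H G) G ^ 2 / z ^ 3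
      - (inner ℝ (H G) G / z / u - z / u ^ 2) := by
    have e1 : inner ℝ (B (b i₀) (b i₀)) G = inner ℝ (B G G) G / z := by
      rw [hb]; simp only [map_smul, smul_apply, inner_smul_left, conj_trivial, hz]; field_simp
    have e2 : inner ℝ (H (b i₀)) G ^ 2 = inner ℝ (H G) G ^ 2 / z := by
      rw [hb, map_smul, inner_smul_left]; simp only [conj_trivial, hz]; field_simp
    have e3 : inner ℝ G (b i₀) ^ 2 = z := by
      rw [hb, inner_smul_right, real_inner_self_eq_norm_sq, hz]; field_simp
    simp only [hF]
    rw [e1, e2, e3, n1, n2]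
    field_simp
  rw [n1, n2] at hS
  rw [hsumF, n3] at hsum
  have a1 : inner ℝ (H G) G = z * (z / u + inner ℝ G ε) := by
    rw [h1, inner_smul_left, inner_add_left, inner_smul_left, real_inner_self_eq_norm_sq,
      real_inner_comm G ε]
    simp only [conj_trivial, ← hz]; ring
  have a2 : ‖H G‖ ^ 2 = z * ((z / u + inner ℝ G ε) ^ 2 + (z * ‖ε‖ ^ 2 - inner ℝ G ε ^ 2)) := by
    rw [h1, norm_smul, mul_pow, norm_add_sq_real, norm_smul, mul_pow, inner_smul_left]
    simp only [conj_trivial, norm_inv, Real.norm_eq_abs, sq_abs, inv_pow, ← hz, abs_of_pos hzpos]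
    field_simp; ring
  set s := inner ℝ G ε
  set a := inner ℝ (H G) G
  set W := ‖H G‖ ^ 2
  set S := ∑ i, ‖H (b i)‖ ^ 2
  set T := tr H
  set L := tr (B G)
  set L' := inner ℝ (B G G) G
  set d := z * ‖ε‖ ^ 2 - s ^ 2
  set ρ := z / u with hρ
  have t1 : T = y - (p - 2) * (ρ + s) := by
    rw [a1] at hE
    have := mul_left_cancel₀ hzpos.ne' (a := z) (b := T + (p - 2) * (ρ + s)) (c := y) (by linarith)
    linarith
  have hmul := mul_le_mul_of_nonneg_right hsum hzpos.le
  have l1 : (L + (p - 2) * L' / z) = 2 * (m - 1) * y * (ρ + s) - 2 * (p - 2) * d := by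
    have : z * (L + (p - 2) * L' / z) = z * (2 * (m - 1) * y * (ρ + s) - 2 * (p - 2) * d) := by
      rw [mul_add, mul_div_cancel₀ _ hzpos.ne']
      rw [a1, a2, t1] at hE'
      linear_combination hE'
    exact mul_left_cancel₀ hzpos.ne' this
  have l2 : ((L + S) / z - 2 * W / z ^ 2 - (T / u - z / u ^ 2) +
      (p - 2) * ((L' + W) / z ^ 2 - 2 * a ^ 2 / z ^ 3 - (a / z / u - z / u ^ 2))) * z =
      (L + (p - 2) * L' / z) + S + (p - 4) * (W / z) - 2 * (p - 2) * (a / z) ^ 2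
        - (T + (p - 2) * (a / z)) * ρ + (p - 1) * ρ ^ 2 := by
    rw [hρ]; field_simp; ring
  have a3 : a / z = ρ + s := by rw [a1]; field_simp
  have a4 : W / z = (ρ + s) ^ 2 + d := by rw [a2]; field_simp
  rw [l2, l1, a3, a4] at hmul
  rw [a4, a3] at hS
  rw [t1] at hS hmul
  have : y - (p - 2) * (ρ + s) - (ρ + s) = y - (p - 1) * (ρ + s) := by ring
  rw [this] at hS
  linarith

end Bernstein

lemma exists_quadratic_bound {θ₀ P τ A : ℝ} (hθ₀ : 0 < θ₀) (hP : 0 < P) (hτ : 0 < τ) (hA : 0 ≤ A) :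
    ∃ K > 0, ∀ e Y R s : ℝ, 0 < e → 0 ≤ Y → 0 ≤ R → |s| ≤ e →
      θ₀ * (Y - P * (R + s)) ^ 2 + τ * Y * R ≤ A * (e ^ 2 + e * (Y + R)) → Y + R ≤ K * e := by
  set θ := min θ₀ (τ / (2 * P)) with hθ
  have hθpos : 0 < θ := lt_min hθ₀ (by positivity)
  have hθ1 : θ ≤ θ₀ := min_le_left _ _
  have hθ2 : 2 * P * θ ≤ τ := by
    have := min_le_right θ₀ (τ / (2 * P))
    rw [← hθ, le_div_iff₀ (by positivity)] at this
    linarith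
  set c := θ * min 1 (P ^ 2) with hc
  have hcpos : 0 < c := mul_pos hθpos (lt_min one_pos (by positivity))
  set A' := A + 2 * θ * P * (1 + P) with hA'
  have hA'pos : 0 < A' := by positivity
  refine ⟨4 * A' / c + 1, by positivity, fun e Y R s he hY hR hs h => ?_⟩
  have hs' := abs_le.1 hs
  have h1 : θ * (Y - P * (R + s)) ^ 2 ≤ θ₀ * (Y - P * (R + s)) ^ 2 :=
    mul_le_mul_of_nonneg_right hθ1 (sq_nonneg _)
  have h2 : 2 * P * θ * (Y * R) ≤ τ * (Y * R) := mul_le_mul_of_nonneg_right hθ2 (by positivity)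
  have h3 : s * (Y - P * R) ≤ e * (Y + P * R) := by
    have e1 : s * Y ≤ e * Y := mul_le_mul_of_nonneg_right hs'.2 hY
    have e2 : -s * (P * R) ≤ e * (P * R) := mul_le_mul_of_nonneg_right (by linarith) (by positivity)
    linarith
  have h4 : θ * (Y ^ 2 + P ^ 2 * R ^ 2) ≤ A * (e ^ 2 + e * (Y + R)) + 2 * θ * P * (e * (Y + P * R)) := by
    have e1 := mul_le_mul_of_nonneg_left h3 (by positivity : 0 ≤ 2 * θ * P)
    have e2 : 0 ≤ θ * (P ^ 2 * s ^ 2) := by positivity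
    linarith
  have h5 : c * (Y ^ 2 + R ^ 2) ≤ θ * (Y ^ 2 + P ^ 2 * R ^ 2) := by
    rw [hc, mul_assoc]
    apply mul_le_mul_of_nonneg_left _ hθpos.le
    have e1 := mul_le_mul_of_nonneg_right (min_le_left 1 (P ^ 2)) (sq_nonneg Y)
    have e2 := mul_le_mul_of_nonneg_right (min_le_right 1 (P ^ 2)) (sq_nonneg R)
    linarith
  have h6 : 2 * θ * P * (e * (Y + P * R)) ≤ 2 * θ * P * (1 + P) * (e ^ 2 + e * (Y + R)) := by
    rw [mul_assoc (2 * θ * P)]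
    apply mul_le_mul_of_nonneg_left _ (by positivity)
    linarith [mul_nonneg he.le hY, mul_nonneg he.le hR, mul_nonneg hP.le (mul_nonneg he.le hY),
      mul_nonneg hP.le (mul_nonneg he.le he.le), mul_nonneg he.le he.le]
  have h7 : c * (Y ^ 2 + R ^ 2) ≤ A' * (e ^ 2 + e * (Y + R)) := by rw [hA']; linarith
  by_contra! hlt
  set T := Y + R with hT
  have hTe : e < T := by
    have : 0 ≤ 4 * A' / c * e := by positivity
    linarith
  have h8 : c * T ^ 2 ≤ c * (2 * (Y ^ 2 + R ^ 2)) :=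
    mul_le_mul_of_nonneg_left (by rw [hT]; linarith [sq_nonneg (Y - R)]) hcpos.le
  have h9 : 4 * A' * e < c * T := by
    have : 4 * A' / c * e < T := by linarith
    rw [div_mul_eq_mul_div, div_lt_iff₀ hcpos] at this
    linarith
  have h10 : A' * (e ^ 2 + e * T) ≤ A' * (2 * (e * T)) :=
    mul_le_mul_of_nonneg_left (by linarith [mul_lt_mul_of_pos_left hTe he]) hA'pos.le
  have h11 := mul_lt_mul_of_pos_right h9 (by linarith : 0 < T)
  linarith

lemma ContDiffAt.hasFDerivAt_gradient_gradient {N : ℕ} {u : Eu N → ℝ} {x : Eu N} (h : ContDiffAt ℝ 3 u x) :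
    HasFDerivAt (fderiv ℝ (gradient u)) (fderiv ℝ (fderiv ℝ (gradient u)) x) x :=
  (((contDiffAt_gradient (m := 2) h (by norm_num)).fderiv_right (m := 1)
    (by norm_num)).differentiableAt (by norm_num)).hasFDerivAt

lemma second_deriv_gradient_symm {N : ℕ} {u : Eu N → ℝ} {x : Eu N} (h : ContDiffAt ℝ 3 u x) (a c : Eu N) :
    fderiv ℝ (fderiv ℝ (gradient u)) x a c = fderiv ℝ (fderiv ℝ (gradient u)) x c a :=
  ((contDiffAt_gradient (m := 2) h (by norm_num)).isSymmSndFDerivAt (by simp)).eq a c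

lemma second_deriv_gradient_inner {N : ℕ} {u : Eu N → ℝ} {x : Eu N} (h : ContDiffAt ℝ 3 u x) (a c d : Eu N) :
    inner ℝ (fderiv ℝ (fderiv ℝ (gradient u)) x a c) d =
      inner ℝ (fderiv ℝ (fderiv ℝ (gradient u)) x a d) c := by
  have key : ∀ c d : Eu N, HasFDerivAt (fun y => inner ℝ (fderiv ℝ (gradient u) y c) d) _ x := fun c d =>
    (h.hasFDerivAt_gradient_gradient.clm_apply (hasFDerivAt_const c x)).inner ℝ (hasFDerivAt_const d x)
  have h2 : (fun y => inner ℝ (fderiv ℝ (gradient u) y c) d) =ᶠ[𝓝 x]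
      fun y => inner ℝ (fderiv ℝ (gradient u) y d) c := by
    filter_upwards [h.eventually (by simp)] with y hy
    exact hessian_symm (hy.of_le (by norm_num)) c d
  have h3 := ((key c d).congr_of_eventuallyEq h2.symm).unique (key d c)
  have h4 := congrArg (fun L => L a) h3
  simpa using h4

/-- A pointwise version of solving `-Δ_p u + |∇u|^q = 0` with the regularity of strong solutions. -/
def SolvesAt {N : ℕ} (p q : ℝ) (u : Eu N → ℝ) (x : Eu N) : Prop :=
  ContDiffAt ℝ 1 u x ∧ (gradient u x ≠ 0 → ContDiffAt ℝ 3 u x) ∧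
    pLaplace p u x = ‖gradient u x‖ ^ q

lemma SolvesAt.gradient_ne_eventually {N : ℕ} {u : Eu N → ℝ} {x : Eu N} (hu : ContDiffAt ℝ 1 u x)
    (h0 : gradient u x ≠ 0) : ∀ᶠ y in 𝓝 x, gradient u y ≠ 0 :=
  (contDiffAt_gradient (m := 0) hu (by norm_num)).continuousAt.eventually_ne h0

lemma sq_rpow_half {a : ℝ} (ha : 0 ≤ a) (s : ℝ) : (a ^ 2) ^ (s / 2) = a ^ s := by
  rw [← Real.rpow_natCast, ← Real.rpow_mul ha]
  congr 1; push_cast; ring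

/-- The equation multiplied out at a noncritical point. -/
lemma SolvesAt.expand {N : ℕ} {p q : ℝ} {u : Eu N → ℝ} {x : Eu N} (h : SolvesAt p q u x)
    (h0 : gradient u x ≠ 0) :
    ‖gradient u x‖ ^ 2 * tr (fderiv ℝ (gradient u) x) +
      (p - 2) * inner ℝ (fderiv ℝ (gradient u) x (gradient u x)) (gradient u x) =
      (‖gradient u x‖ ^ 2) ^ ((q + 4 - p) / 2) := by
  have hpos : 0 < ‖gradient u x‖ := norm_pos_iff.2 h0
  have h1 := h.2.2
  rw [pLaplace_eq ((h.2.1 h0).of_le (by norm_num)) h0] at h1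
  rw [sq_rpow_half hpos.le, show q + 4 - p = q + 2 - (p - 2) by ring, Real.rpow_sub hpos,
    Real.rpow_add hpos, ← h1, real_inner_comm]
  have : 0 < ‖gradient u x‖ ^ (p - 2) := by positivity
  norm_num
  field_simp

/-- The equation differentiated along the gradient. -/
lemma SolvesAt.expand_deriv {N : ℕ} {p q : ℝ} {u : Eu N → ℝ} {x : Eu N}
    (h : ∀ᶠ y in 𝓝 x, SolvesAt p q u y) (h0 : gradient u x ≠ 0) :
    2 * inner ℝ (fderiv ℝ (gradient u) x (gradient u x)) (gradient u x) * tr (fderiv ℝ (gradient u) x) +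
      ‖gradient u x‖ ^ 2 * tr (fderiv ℝ (fderiv ℝ (gradient u)) x (gradient u x)) +
      (p - 2) * (2 * ‖fderiv ℝ (gradient u) x (gradient u x)‖ ^ 2 +
        inner ℝ (fderiv ℝ (fderiv ℝ (gradient u)) x (gradient u x) (gradient u x)) (gradient u x)) =
      2 * ((q + 4 - p) / 2) * (‖gradient u x‖ ^ 2) ^ ((q + 4 - p) / 2 - 1) *
        inner ℝ (fderiv ℝ (gradient u) x (gradient u x)) (gradient u x) := by
  have hpos : 0 < ‖gradient u x‖ := norm_pos_iff.2 h0
  have hx := h.self_of_nhds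
  have h3 := hx.2.1 h0
  have hg : HasFDerivAt (gradient u) (fderiv ℝ (gradient u) x) x :=
    (differentiableAt_gradient (h3.of_le (by norm_num))).hasFDerivAt
  have hH := h3.hasFDerivAt_gradient_gradient
  have hl := ((hg.norm_sq).mul (trL.hasFDerivAt.comp x hH)).add
    (((hH.clm_apply hg).inner ℝ hg).const_mul (p - 2))
  have hr := hg.norm_sq.rpow_const (p := (q + 4 - p) / 2) (Or.inl (by positivity))
  have heq : (fun y => (‖gradient u y‖ ^ 2) ^ ((q + 4 - p) / 2)) =ᶠ[𝓝 x]
      fun y => ‖gradient u y‖ ^ 2 * trL (fderiv ℝ (gradient u) y) +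
      (p - 2) * inner ℝ (fderiv ℝ (gradient u) y (gradient u y)) (gradient u y) := by
    filter_upwards [h, SolvesAt.gradient_ne_eventually hx.1 h0] with y hy hy0
    exact (hy.expand hy0).symm
  have h4 := hl.unique (hr.congr_of_eventuallyEq heq.symm)
  have h5 := congrArg (fun L => L (gradient u x)) h4
  simp at h5
  have h6 := hessian_symm (h3.of_le (by norm_num)) (gradient u x) (fderiv ℝ (gradient u) x (gradient u x))
  rw [real_inner_self_eq_norm_sq] at h6
  simp only [← inner_gradient_left, real_inner_comm _ (gradient u x)] at h5
  rw [← h6] at h5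
  linarith

section BernsteinMax
variable {N : ℕ}

lemma hasDerivAt_line (x e : Eu N) (t : ℝ) : HasDerivAt (fun t : ℝ => x + t • e) e t := by
  simpa using ((hasDerivAt_id t).smul_const e).const_add x

lemma tendsto_line (x e : Eu N) : Tendsto (fun t : ℝ => x + t • e) (𝓝 0) (𝓝 x) := by
  simpa using (hasDerivAt_line x e 0).continuousAt.tendsto

/-- First and second order conditions for the Bernstein auxiliary function. -/
lemma bernstein_conditions {u : Eu N → ℝ} {x₀ x₁ : Eu N} {r α : ℝ}
    (hu3 : ContDiffAt ℝ 3 u x₁) (hpos : 0 < u x₁) (h0 : gradient u x₁ ≠ 0)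
    (hη : 0 < r ^ 2 - ‖x₁ - x₀‖ ^ 2)
    (hmax : IsLocalMax (fun y => 1 / 2 * Real.log (‖gradient u y‖ ^ 2) - Real.log (u y)
      + α * Real.log (r ^ 2 - ‖y - x₀‖ ^ 2)) x₁) (e : Eu N) :
    inner ℝ (fderiv ℝ (gradient u) x₁ e) (gradient u x₁) / ‖gradient u x₁‖ ^ 2
      - inner ℝ (gradient u x₁) e / u x₁
      - 2 * α * inner ℝ (x₁ - x₀) e / (r ^ 2 - ‖x₁ - x₀‖ ^ 2) = 0 ∧
    (inner ℝ (fderiv ℝ (fderiv ℝ (gradient u)) x₁ e e) (gradient u x₁) +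
        ‖fderiv ℝ (gradient u) x₁ e‖ ^ 2) / ‖gradient u x₁‖ ^ 2
      - 2 * inner ℝ (fderiv ℝ (gradient u) x₁ e) (gradient u x₁) ^ 2 / (‖gradient u x₁‖ ^ 2) ^ 2
      - (inner ℝ (fderiv ℝ (gradient u) x₁ e) e / u x₁ - inner ℝ (gradient u x₁) e ^ 2 / u x₁ ^ 2)
      - 2 * α * (‖e‖ ^ 2 / (r ^ 2 - ‖x₁ - x₀‖ ^ 2) +
          2 * inner ℝ (x₁ - x₀) e ^ 2 / (r ^ 2 - ‖x₁ - x₀‖ ^ 2) ^ 2) ≤ 0 := by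
  set Ψ : Eu N → ℝ := fun y => inner ℝ (fderiv ℝ (gradient u) y e) (gradient u y) / ‖gradient u y‖ ^ 2
      - inner ℝ (gradient u y) e / u y - 2 * α * inner ℝ (y - x₀) e / (r ^ 2 - ‖y - x₀‖ ^ 2) with hΨ
  have hη' : ∀ᶠ y in 𝓝 x₁, 0 < r ^ 2 - ‖y - x₀‖ ^ 2 :=
    (by fun_prop : Continuous fun y => r ^ 2 - ‖y - x₀‖ ^ 2).continuousAt.eventually
      (lt_mem_nhds hη)
  have hg' : ∀ t : ℝ, ContDiffAt ℝ 3 u (x₁ + t • e) →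
      HasDerivAt (fun t : ℝ => gradient u (x₁ + t • e)) (fderiv ℝ (gradient u) (x₁ + t • e) e) t :=
    fun t ht => HasFDerivAt.comp_hasDerivAt (l := gradient u) t
      (differentiableAt_gradient (ht.of_le (by norm_num))).hasFDerivAt (hasDerivAt_line x₁ e t)
  have hu' : ∀ t : ℝ, ContDiffAt ℝ 3 u (x₁ + t • e) →
      HasDerivAt (fun t : ℝ => u (x₁ + t • e)) (inner ℝ (gradient u (x₁ + t • e)) e) t := fun t ht => by
    rw [inner_gradient_left]
    exact HasFDerivAt.comp_hasDerivAt (l := u) t (ht.differentiableAt (by norm_num)).hasFDerivAt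
      (hasDerivAt_line x₁ e t)
  have hd' : ∀ t : ℝ, HasDerivAt (fun t : ℝ => r ^ 2 - ‖x₁ + t • e - x₀‖ ^ 2)
      (- (2 * inner ℝ (x₁ + t • e - x₀) e)) t := fun t =>
    ((hasDerivAt_line x₁ e t).sub_const x₀).norm_sq.const_sub _
  have hf : ∀ᶠ t in 𝓝 (0 : ℝ), HasDerivAt (fun t : ℝ => 1 / 2 * Real.log (‖gradient u (x₁ + t • e)‖ ^ 2)
      - Real.log (u (x₁ + t • e)) + α * Real.log (r ^ 2 - ‖x₁ + t • e - x₀‖ ^ 2)) (Ψ (x₁ + t • e)) t := by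
    filter_upwards [(tendsto_line x₁ e).eventually (hu3.eventually (by simp)),
      (tendsto_line x₁ e).eventually hη',
      (tendsto_line x₁ e).eventually (hu3.continuousAt.eventually_ne hpos.ne'),
      (tendsto_line x₁ e).eventually (SolvesAt.gradient_ne_eventually (hu3.of_le (by norm_num)) h0)]
      with t h1 h2 h3 h4
    have a1 := ((hg' t h1).norm_sq.log (by positivity)).const_mul (1 / 2 : ℝ)
    have a2 := (hu' t h1).log h3
    have a3 := ((hd' t).log h2.ne').const_mul α
    refine ((a1.sub a2).add a3).congr_deriv ?_
    simp only [hΨ]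
    rw [real_inner_comm (gradient u (x₁ + t • e)) (fderiv ℝ (gradient u) (x₁ + t • e) e)]
    ring
  have hmax' := (tendsto_line x₁ e).eventually hmax
  have hmax2 : IsLocalMax (fun t : ℝ => 1 / 2 * Real.log (‖gradient u (x₁ + t • e)‖ ^ 2)
      - Real.log (u (x₁ + t • e)) + α * Real.log (r ^ 2 - ‖x₁ + t • e - x₀‖ ^ 2)) 0 := by
    simpa [IsLocalMax, IsMaxFilter] using hmax'
  constructor
  · have := hmax2.hasDerivAt_eq_zero hf.self_of_nhds
    simpa [hΨ] using this
  · have hx : x₁ + (0 : ℝ) • e = x₁ := by simp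
    have g1 := hg' 0 (by rwa [hx])
    have u1 := hu' 0 (by rwa [hx])
    have d1 := hd' 0
    have c1 : HasDerivAt (fun t : ℝ => fderiv ℝ (gradient u) (x₁ + t • e) e)
        (fderiv ℝ (fderiv ℝ (gradient u)) (x₁ + (0 : ℝ) • e) e e) 0 := by
      have k1 : HasFDerivAt (fderiv ℝ (gradient u)) (fderiv ℝ (fderiv ℝ (gradient u)) (x₁ + (0 : ℝ) • e))
          (x₁ + (0 : ℝ) • e) := by
        rw [hx]; exact hu3.hasFDerivAt_gradient_gradient
      have k2 := HasFDerivAt.comp_hasDerivAt (l := fderiv ℝ (gradient u)) (0 : ℝ) k1 (hasDerivAt_line x₁ e 0)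
      have := k2.clm_apply (hasDerivAt_const (0 : ℝ) e)
      simpa using this
    have hG : (0 : ℝ) < ‖gradient u x₁‖ := norm_pos_iff.2 h0
    have b1 := c1.inner ℝ g1
    have b2 := g1.inner ℝ (hasDerivAt_const (0 : ℝ) e)
    have b3 := (((hasDerivAt_line x₁ e 0).sub_const x₀).inner ℝ
      (hasDerivAt_const (0 : ℝ) e)).const_mul (2 * α)
    have e1 := b1.div g1.norm_sq (by rw [hx]; positivity)
    have e2 := b2.div u1 (by rw [hx]; exact hpos.ne')
    have e3 := b3.div d1 (by rw [hx]; exact hη.ne')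
    have := second_deriv_nonpos_of_isLocalMax hf ((e1.sub e2).sub e3) hmax2
    rw [hx] at this
    refine le_trans (le_of_eq ?_) this
    rw [real_inner_comm (fderiv ℝ (gradient u) x₁ e) (gradient u x₁)]
    simp only [inner_zero_right, zero_add, real_inner_self_eq_norm_sq]
    generalize inner ℝ (fderiv ℝ (gradient u) x₁ e) (gradient u x₁) = a
    generalize inner ℝ (gradient u x₁) e = b at *
    generalize r ^ 2 - ‖x₁ - x₀‖ ^ 2 = c at *
    generalize inner ℝ (x₁ - x₀) e = d at *
    have := hpos.ne'
    have := hη.ne'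
    generalize fderiv ℝ (fderiv ℝ (gradient u)) x₁ e e = B at *
    generalize fderiv ℝ (gradient u) x₁ e = H at *
    generalize u x₁ = U at *
    generalize gradient u x₁ = g at *
    field_simp
    ring
end BernsteinMax

section BernsteinEst
variable {N : ℕ}

set_option maxHeartbeats 1000000 in
lemma bernstein_at_max (hN : 2 ≤ N) {p q α : ℝ} (hp : 1 < p) (hq : p - 1 < q) (hα : 0 < α) :
    ∃ K > 0, ∀ (u : Eu N → ℝ) (x₀ x₁ : Eu N) (r : ℝ), 0 < r → (∀ᶠ y in 𝓝 x₁, SolvesAt p q u y) →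
      0 < u x₁ → gradient u x₁ ≠ 0 → 0 < r ^ 2 - ‖x₁ - x₀‖ ^ 2 →
      IsLocalMax (fun y => 1 / 2 * Real.log (‖gradient u y‖ ^ 2) - Real.log (u y)
        + α * Real.log (r ^ 2 - ‖y - x₀‖ ^ 2)) x₁ →
      ‖gradient u x₁‖ ^ (q + 1 - p) + ‖gradient u x₁‖ / u x₁ ≤ K * (r / (r ^ 2 - ‖x₁ - x₀‖ ^ 2)) := by
  have hN2 : (2 : ℝ) ≤ N := by exact_mod_cast hN
  obtain ⟨K, hK, hKb⟩ := exists_quadratic_bound (θ₀ := 1 / ((N : ℝ) - 1)) (P := p - 1) (τ := q + 1 - p)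
    (A := (N + p) * (3 / (2 * α)) + p + q + 2 * p + 4) (by apply one_div_pos.2; linarith) (by linarith)
    (by linarith) (by have : 0 < q := by linarith
                      positivity)
  refine ⟨K * (2 * α), by positivity, fun u x₀ x₁ r hr hS hpos h0 hη hmax => ?_⟩
  have hsol := hS.self_of_nhds
  have h3 := hsol.2.1 h0
  have hcond := bernstein_conditions h3 hpos h0 hη hmax
  set η := r ^ 2 - ‖x₁ - x₀‖ ^ 2 with hηdef
  set G := gradient u x₁ with hG
  have hGpos : 0 < ‖G‖ := norm_pos_iff.2 h0
  set ε : Eu N := (2 * α / η) • (x₁ - x₀) with hε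
  have hxr : ‖x₁ - x₀‖ ≤ r := by
    refine le_of_sq_le_sq ?_ hr.le
    linarith
  have hηr : η ≤ r ^ 2 := by rw [hηdef]; linarith [sq_nonneg ‖x₁ - x₀‖]
  have hεn : ‖ε‖ ≤ 2 * α * (r / η) := by
    rw [hε, norm_smul, Real.norm_eq_abs, abs_of_pos (by positivity)]
    calc 2 * α / η * ‖x₁ - x₀‖ ≤ 2 * α / η * r := by gcongr
      _ = _ := by ring
  have hH1 : fderiv ℝ (gradient u) x₁ G = ‖G‖ ^ 2 • ((u x₁)⁻¹ • G + ε) := by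
    apply ext_inner_right ℝ
    intro e
    have := (hcond e).1
    rw [hessian_symm (h3.of_le (by norm_num)), inner_smul_left, inner_add_left, inner_smul_left, hε,
      inner_smul_left]
    simp only [conj_trivial]
    field_simp at this ⊢
    linarith
  have halg := bernstein_algebra hN (D := 6 * α * (r / η) ^ 2) (m := (q + 4 - p) / 2)
    (y := (‖G‖ ^ 2) ^ ((q + 4 - p) / 2 - 1)) hp hpos h0
    (H := fderiv ℝ (gradient u) x₁) (B := fderiv ℝ (fderiv ℝ (gradient u)) x₁) (ε := ε)
    (hessian_symm (h3.of_le (by norm_num))) (second_deriv_gradient_symm h3)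
    (second_deriv_gradient_inner h3)
    (by
      rw [hsol.expand h0, ← Real.rpow_one_add' (by positivity) (by linarith)]
      congr 1; ring)
    (SolvesAt.expand_deriv hS h0) hH1 (by
      intro e he
      have := (hcond e).2
      rw [he] at this
      have hi : inner ℝ (x₁ - x₀) e ^ 2 ≤ r ^ 2 := by
        have h1 := abs_real_inner_le_norm (x₁ - x₀) e
        rw [he, mul_one] at h1
        rw [← sq_abs]
        gcongr
        exact h1.trans hxr
      have hb : 2 * α * (1 ^ 2 / η + 2 * inner ℝ (x₁ - x₀) e ^ 2 / η ^ 2) ≤ 6 * α * (r / η) ^ 2 := by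
        have h1 : (1 : ℝ) ^ 2 / η ≤ r ^ 2 / η ^ 2 := by
          rw [div_le_div_iff₀ hη (by positivity)]; nlinarith
        have h2 : 2 * inner ℝ (x₁ - x₀) e ^ 2 / η ^ 2 ≤ 2 * r ^ 2 / η ^ 2 := by gcongr
        calc _ ≤ 2 * α * (r ^ 2 / η ^ 2 + 2 * r ^ 2 / η ^ 2) := by gcongr
          _ = _ := by rw [div_pow]; ring
      linarith)
  have hy : (‖G‖ ^ 2) ^ ((q + 4 - p) / 2 - 1) = ‖G‖ * ‖G‖ ^ (q + 1 - p) := by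
    rw [show (q + 4 - p) / 2 - 1 = (1 + (q + 1 - p)) / 2 by ring, sq_rpow_half hGpos.le,
      Real.rpow_add hGpos, Real.rpow_one]
  rw [hy] at halg
  set Y := ‖G‖ ^ (q + 1 - p) with hY
  set g := ‖G‖ with hg
  set s := inner ℝ G ε / g with hs
  have hsin : inner ℝ G ε = g * s := by rw [hs]; field_simp
  set R := g / u x₁ with hR
  have hR' : g ^ 2 / u x₁ = g * R := by rw [hR]; ring
  set e := 2 * α * (r / η) with he
  have hepos : 0 < e := by positivity
  have hsε : |s| ≤ ‖ε‖ := by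
    rw [hs, abs_div, abs_of_pos hGpos, div_le_iff₀ hGpos, mul_comm]
    exact abs_real_inner_le_norm _ _
  have hY0 : 0 < Y := by positivity
  have hR0 : 0 < R := by positivity
  rw [hR', hsin] at halg
  have := hKb e Y R s hepos hY0.le hR0.le (hsε.trans hεn) (by
    have hD : 6 * α * (r / η) ^ 2 = 3 / (2 * α) * e ^ 2 := by rw [he]; field_simp; ring
    rw [hD] at halg
    have hg2 : 0 < g ^ 2 := by positivity
    have hs1 := abs_le.1 (hsε.trans hεn)
    have hd0 : 0 ≤ ‖ε‖ ^ 2 - s ^ 2 := by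
      have := pow_le_pow_left₀ (abs_nonneg s) hsε 2
      rw [sq_abs] at this; linarith
    have hd1 : ‖ε‖ ^ 2 - s ^ 2 ≤ e ^ 2 := by
      have := pow_le_pow_left₀ (norm_nonneg ε) hεn 2
      linarith [sq_nonneg s]
    have hse : s ^ 2 ≤ e ^ 2 := sq_le_sq' hs1.1 hs1.2
    have k0 : (1 / ((N : ℝ) - 1) * (Y - (p - 1) * (R + s)) ^ 2 + (q + 1 - p) * Y * R) * g ^ 2 ≤
        ((N + p - 2) * (3 / (2 * α) * e ^ 2) + (p - 2) * (‖ε‖ ^ 2 - s ^ 2) - (q + 2 - p) * Y * s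
          + (p - 1) * (2 * R * s + s ^ 2)) * g ^ 2 := by
      refine le_trans (le_of_eq ?_) (halg.trans (le_of_eq ?_)) <;> ring
    have k1 := le_of_mul_le_mul_right k0 hg2
    refine k1.trans ?_
    have m1 : (N + p - 2) * (3 / (2 * α) * e ^ 2) ≤ (N + p) * (3 / (2 * α)) * e ^ 2 := by
      rw [← mul_assoc]; gcongr; linarith
    have m2 : (p - 2) * (‖ε‖ ^ 2 - s ^ 2) ≤ p * e ^ 2 :=
      (mul_le_mul_of_nonneg_right (by linarith) hd0).trans (mul_le_mul_of_nonneg_left hd1 (by linarith))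
    have m3 : -((q + 2 - p) * Y * s) ≤ (q + 2 - p) * Y * e := by
      have h1 : 0 ≤ (q + 2 - p) * Y := mul_nonneg (by linarith) hY0.le
      have h2 := mul_le_mul_of_nonneg_left (by linarith : -s ≤ e) h1
      linarith
    have m4 : (p - 1) * (2 * R * s + s ^ 2) ≤ (p - 1) * (2 * R * e + e ^ 2) := by
      apply mul_le_mul_of_nonneg_left _ (by linarith)
      have := mul_le_mul_of_nonneg_left hs1.2 hR0.le
      linarith
    have m5 : 0 ≤ (N + p) * (3 / (2 * α)) * (e * (Y + R)) := by positivity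
    have m6 : 0 ≤ p * (e * Y) := by positivity
    have m7 : 0 ≤ p * (e * R) := by positivity
    have m8 : 0 ≤ q * (e * R) := mul_nonneg (by linarith) (by positivity)
    have m9 : 0 ≤ q * e ^ 2 := mul_nonneg (by linarith) (by positivity)
    have m10 : 0 ≤ p * e ^ 2 := by positivity
    have m11 : 0 < e * Y := by positivity
    have m12 : 0 < e * R := by positivity
    have m13 : 0 < e ^ 2 := by positivity
    linarith)
  calc Y + R ≤ K * e := this
    _ = _ := by rw [he]; ring

end BernsteinEst

section BernsteinFinal
variable {N : ℕ}

lemma SolvesAt.add_const {p q : ℝ} {u : Eu N → ℝ} {x : Eu N} (h : SolvesAt p q u x) (c : ℝ) :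
    SolvesAt p q (fun y => u y + c) x := by
  refine ⟨h.1.add contDiffAt_const, fun h0 => ?_, ?_⟩
  · rw [gradient_add_const] at h0
    exact (h.2.1 h0).add contDiffAt_const
  · rw [gradient_add_const, ← h.2.2, pLaplace, pLaplace, pGradField_add_const]

lemma bernstein_max (hN : 2 ≤ N) {p q α : ℝ} (hp : 1 < p) (hq : p - 1 < q) (hα : 0 < α) :
    ∃ K > 0, ∀ (u : Eu N → ℝ) (x₀ : Eu N) (r : ℝ), 0 < r →
      (∀ y ∈ closedBall x₀ r, ∀ᶠ z in 𝓝 y, SolvesAt p q u z) → (∀ y ∈ closedBall x₀ r, 0 < u y) →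
      gradient u x₀ ≠ 0 → ∃ η : ℝ, ∃ y ∈ closedBall x₀ r, 0 < η ∧ η ≤ r ^ 2 ∧
        (r ^ 2) ^ α * (‖gradient u x₀‖ / u x₀) ≤ η ^ α * (‖gradient u y‖ / u y) ∧
        ‖gradient u y‖ ^ (q + 1 - p) + ‖gradient u y‖ / u y ≤ K * (r / η) := by
  obtain ⟨K, hK, hKb⟩ := bernstein_at_max hN hp hq hα
  refine ⟨K, hK, fun u x₀ r hr hS hpos h0 => ?_⟩
  set F : Eu N → ℝ := fun y => (r ^ 2 - ‖y - x₀‖ ^ 2) ^ α * (‖gradient u y‖ / u y) with hF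
  have hcont : ContinuousOn F (closedBall x₀ r) := by
    intro y hy
    have h1 := (hS y hy).self_of_nhds
    have hg : ContinuousAt (gradient u) y := (contDiffAt_gradient (m := 0) h1.1 (by norm_num)).continuousAt
    have hu : ContinuousAt u y := h1.1.continuousAt
    apply ContinuousAt.continuousWithinAt
    refine ContinuousAt.mul (ContinuousAt.rpow_const (by fun_prop) (Or.inr hα.le)) ?_
    exact hg.norm.div hu (hpos y hy).ne'
  obtain ⟨x₁, hx₁, hmax⟩ := (isCompact_closedBall x₀ r).exists_isMaxOn ⟨x₀, mem_closedBall_self hr.le⟩ hcont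
  have hle : F x₀ ≤ F x₁ := hmax (mem_closedBall_self hr.le)
  have hF0 : F x₀ = (r ^ 2) ^ α * (‖gradient u x₀‖ / u x₀) := by simp [hF]
  have hF0pos : 0 < F x₀ := by
    have := hpos x₀ (mem_closedBall_self hr.le)
    have := norm_pos_iff.2 h0
    rw [hF0]; positivity
  have hF1pos : 0 < F x₁ := hF0pos.trans_le hle
  have hη0 : 0 ≤ r ^ 2 - ‖x₁ - x₀‖ ^ 2 := by
    have := mem_closedBall_iff_norm.1 hx₁
    nlinarith [norm_nonneg (x₁ - x₀)]
  have hη : 0 < r ^ 2 - ‖x₁ - x₀‖ ^ 2 := by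
    refine lt_of_le_of_ne hη0 fun h => ?_
    simp only [hF] at hF1pos
    rw [← h, Real.zero_rpow hα.ne', zero_mul] at hF1pos
    exact lt_irrefl _ hF1pos
  have hg1 : gradient u x₁ ≠ 0 := by
    intro h
    simp [hF, h] at hF1pos
  have hu1 := hpos x₁ hx₁
  have hsol := (hS x₁ hx₁).self_of_nhds
  have hloc : IsLocalMax (fun y => 1 / 2 * Real.log (‖gradient u y‖ ^ 2) - Real.log (u y)
      + α * Real.log (r ^ 2 - ‖y - x₀‖ ^ 2)) x₁ := by
    have hη' : ∀ᶠ y in 𝓝 x₁, 0 < r ^ 2 - ‖y - x₀‖ ^ 2 :=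
      (by fun_prop : Continuous fun y => r ^ 2 - ‖y - x₀‖ ^ 2).continuousAt.eventually
        (lt_mem_nhds hη)
    have hu' : ∀ᶠ y in 𝓝 x₁, 0 < u y := hsol.1.continuousAt.eventually (lt_mem_nhds hu1)
    have hlog : ∀ y, 0 < r ^ 2 - ‖y - x₀‖ ^ 2 → 0 < u y → gradient u y ≠ 0 →
        1 / 2 * Real.log (‖gradient u y‖ ^ 2) - Real.log (u y)
          + α * Real.log (r ^ 2 - ‖y - x₀‖ ^ 2) = Real.log (F y) ∧ 0 < F y := by
      intro y h1 h2 h3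
      have h3' := norm_pos_iff.2 h3
      constructor
      · simp only [hF]
        rw [Real.log_mul (by positivity) (by positivity), Real.log_div h3'.ne' h2.ne', Real.log_rpow h1,
          Real.log_pow]
        push_cast; ring
      · simp only [hF]; positivity
    filter_upwards [hη', hu', SolvesAt.gradient_ne_eventually hsol.1 hg1] with y h1 h2 h3
    rw [(hlog y h1 h2 h3).1, (hlog x₁ hη hu1 hg1).1]
    apply Real.log_le_log (hlog y h1 h2 h3).2
    apply hmax
    rw [mem_closedBall_iff_norm]
    refine le_of_sq_le_sq ?_ hr.le
    linarith
  refine ⟨r ^ 2 - ‖x₁ - x₀‖ ^ 2, x₁, hx₁, hη, by simp, ?_, ?_⟩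
  · rw [← hF0]; exact hle
  · exact hKb u x₀ x₁ r hr (hS x₁ hx₁) hu1 hg1 hη hloc

/-- Interior gradient bounds for positive solutions. -/
lemma gradient_bounds (hN : 2 ≤ N) {p q : ℝ} (hp : 1 < p) (hq : p - 1 < q) (hqp : q < p) :
    ∃ K > 0, ∀ (u : Eu N → ℝ) (x₀ : Eu N) (r : ℝ), 0 < r →
      (∀ y ∈ closedBall x₀ r, ∀ᶠ z in 𝓝 y, SolvesAt p q u z) → (∀ y ∈ closedBall x₀ r, 0 < u y) →
      ‖gradient u x₀‖ ≤ K * (u x₀ / r) ∧ ‖gradient u x₀‖ ≤ K * r ^ (-(1 / (q + 1 - p))) := by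
  set τ := q + 1 - p with hτ
  have hτ0 : 0 < τ := by rw [hτ]; linarith
  have hτ1 : τ < 1 := by rw [hτ]; linarith
  set α := 1 / τ with hα
  have hα1 : 1 < α := by rw [hα, lt_div_iff₀ hτ0]; linarith
  have hα0 : 0 < α := by linarith
  obtain ⟨K, hK, hKb⟩ := bernstein_max hN hp hq hα0
  refine ⟨max K (K ^ α), lt_max_of_lt_left hK, fun u x₀ r hr hS hpos => ?_⟩
  have hu0 := hpos x₀ (mem_closedBall_self hr.le)
  rcases eq_or_ne (gradient u x₀) 0 with h0 | h0
  · rw [h0, norm_zero]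
    constructor
    · have := lt_max_of_lt_left (c := K ^ α) hK
      positivity
    · have := lt_max_of_lt_left (c := K ^ α) hK
      positivity
  have hg0 := norm_pos_iff.2 h0
  constructor
  · obtain ⟨η, y, hy, hη, hηr, h1, h2⟩ := hKb u x₀ r hr hS hpos h0
    have hR : ‖gradient u y‖ / u y ≤ K * (r / η) := by
      have : 0 ≤ ‖gradient u y‖ ^ τ := by positivity
      linarith
    have h3 : (r ^ 2) ^ α * (‖gradient u x₀‖ / u x₀) ≤ (r ^ 2) ^ α * (K / r) := by
      calc _ ≤ η ^ α * (‖gradient u y‖ / u y) := h1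
        _ ≤ η ^ α * (K * (r / η)) := by gcongr
        _ = η ^ (α - 1) * (K * r) := by rw [Real.rpow_sub_one hη.ne']; ring
        _ ≤ (r ^ 2) ^ (α - 1) * (K * r) := by
          gcongr
        _ = _ := by rw [Real.rpow_sub_one (by positivity)]; field_simp
    have h4 := le_of_mul_le_mul_left h3 (by positivity)
    rw [div_le_iff₀ hu0] at h4
    calc ‖gradient u x₀‖ ≤ K / r * u x₀ := h4
      _ = K * (u x₀ / r) := by ring
      _ ≤ _ := by gcongr; exact le_max_left _ _
  · have key : ∀ k : ℝ, 0 < k → (r ^ 2) ^ α * ‖gradient u x₀‖ ≤ (K * r) ^ α * (u x₀ / k + 1) := by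
      intro k hk
      obtain ⟨η, y, hy, hη, hηr, h1, h2⟩ := hKb (fun y => u y + k) x₀ r hr
        (fun y hy => (hS y hy).mono fun z hz => hz.add_const k)
        (fun y hy => by have := hpos y hy; positivity) (by rwa [gradient_add_const])
      simp only [gradient_add_const] at h1 h2
      have huy := hpos y hy
      have hY : ‖gradient u y‖ ≤ (K * (r / η)) ^ α := by
        have h5 : ‖gradient u y‖ ^ τ ≤ K * (r / η) := by
          have : 0 ≤ ‖gradient u y‖ / (u y + k) := by positivity
          linarith
        have := Real.rpow_le_rpow (by positivity) h5 hα0.le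
        rwa [← Real.rpow_mul (norm_nonneg _), hα, mul_one_div_cancel hτ0.ne', Real.rpow_one] at this
      have h6 : η ^ α * (‖gradient u y‖ / (u y + k)) ≤ (K * r) ^ α / k := by
        calc _ ≤ η ^ α * ((K * (r / η)) ^ α / k) := by gcongr; linarith
          _ = (K * r) ^ α / k := by
            rw [← mul_div_assoc, ← Real.mul_rpow hη.le (by positivity)]
            congr 2; field_simp
      have h7 := h1.trans h6
      have h8 : (r ^ 2) ^ α * ‖gradient u x₀‖ ≤ (K * r) ^ α / k * (u x₀ + k) := by
        rw [← mul_div_assoc, div_le_iff₀ (by positivity)] at h7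
        exact h7
      refine h8.trans (le_of_eq ?_)
      field_simp
    have hlim : Tendsto (fun k : ℝ => (K * r) ^ α * (u x₀ / k + 1)) atTop (𝓝 ((K * r) ^ α * (0 + 1))) :=
      (((tendsto_const_nhds.div_atTop tendsto_id)).add_const 1).const_mul _
    have h9 := ge_of_tendsto hlim ((eventually_gt_atTop 0).mono key)
    rw [zero_add, mul_one, Real.mul_rpow hK.le hr.le] at h9
    have h10 : ‖gradient u x₀‖ ≤ K ^ α * r ^ (-α) := by
      have h11 : (r ^ 2) ^ α = r ^ α * r ^ α := by rw [← Real.mul_rpow hr.le hr.le, sq]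
      rw [h11] at h9
      rw [Real.rpow_neg hr.le, ← div_eq_mul_inv, le_div_iff₀ (by positivity)]
      have : r ^ α * (‖gradient u x₀‖ * r ^ α) ≤ r ^ α * K ^ α := by linarith
      exact le_of_mul_le_mul_left this (by positivity)
    refine h10.trans ?_
    gcongr
    exact le_max_right _ _

end BernsteinFinal

section Barriers
variable {N : ℕ}

lemma contDiffAt_norm_rpow {x : Eu N} (hx : x ≠ 0) (c s : ℝ) {n : WithTop ℕ∞} :
    ContDiffAt ℝ n (fun y : Eu N => c * ‖y‖ ^ s) x :=
  contDiffAt_const.mul ((contDiffAt_norm ℝ hx).rpow_const_of_ne (norm_ne_zero_iff.2 hx))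

lemma gradient_norm_rpow {x : Eu N} (hx : x ≠ 0) (c s : ℝ) :
    gradient (fun y : Eu N => c * ‖y‖ ^ s) x = (c * s * ‖x‖ ^ (s - 2)) • x := by
  have hpos : 0 < ‖x‖ := norm_pos_iff.2 hx
  rw [gradient_const_mul, mul_assoc, mul_smul]
  congr 1
  have h1 := ((hasFDerivAt_id x).norm_sq).rpow_const (p := s / 2) (Or.inl (by simp; exact hx))
  have h2 : (fun y : Eu N => (‖id y‖ ^ 2) ^ (s / 2)) = fun y => ‖y‖ ^ s := by
    ext y; exact sq_rpow_half (norm_nonneg _) s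
  rw [h2] at h1
  apply ext_inner_right ℝ
  intro v
  rw [inner_gradient_left, h1.fderiv, inner_smul_left]
  have h3 : (‖x‖ ^ 2) ^ (s / 2 - 1) = ‖x‖ ^ (s - 2) := by
    rw [← sq_rpow_half hpos.le]; congr 1; ring
  simp [h3]
  ring

lemma norm_gradient_norm_rpow {x : Eu N} (hx : x ≠ 0) (c s : ℝ) :
    ‖gradient (fun y : Eu N => c * ‖y‖ ^ s) x‖ = |c * s| * ‖x‖ ^ (s - 1) := by
  have hpos : 0 < ‖x‖ := norm_pos_iff.2 hx
  rw [gradient_norm_rpow hx, norm_smul, Real.norm_eq_abs, abs_mul,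
    abs_of_pos (Real.rpow_pos_of_pos hpos _), mul_assoc, ← Real.rpow_add_one hpos.ne']
  congr 2; ring

lemma tr_fderiv_norm_rpow_smul {x : Eu N} (hx : x ≠ 0) (c μ : ℝ) :
    tr (fderiv ℝ (fun y : Eu N => (c * ‖y‖ ^ μ) • y) x) = c * ((N + μ) * ‖x‖ ^ μ) := by
  have hpos : 0 < ‖x‖ := norm_pos_iff.2 hx
  have h1 := (hasFDerivAt_norm_rpow_smul (hasFDerivAt_id x) hx μ).const_smul c
  have h2 : (fun y : Eu N => (c * ‖y‖ ^ μ) • y) = c • fun y : Eu N => ‖id y‖ ^ μ • id y := by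
    ext1 y; simp [mul_smul]
  rw [h2, h1.fderiv, tr_smul, tr_smul, tr_add, tr_id, tr_smul, tr_smulRight]
  simp only [ContinuousLinearMap.comp_id, id, innerSL_apply_apply, real_inner_self_eq_norm_sq]
  field_simp

lemma pLaplace_norm_rpow {p : ℝ} {x : Eu N} (hx : x ≠ 0) (c s : ℝ) :
    pLaplace p (fun y : Eu N => c * ‖y‖ ^ s) x =
      |c * s| ^ (p - 2) * (c * s) * ((N - 1 + (s - 1) * (p - 1)) * ‖x‖ ^ ((s - 1) * (p - 1) - 1)) := by
  have h : pGradField p (fun y : Eu N => c * ‖y‖ ^ s) =ᶠ[𝓝 x] fun y =>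
      ((|c * s| ^ (p - 2) * (c * s)) * ‖y‖ ^ ((s - 1) * (p - 1) - 1)) • y := by
    filter_upwards [isOpen_ne.mem_nhds hx] with y hy
    have hpos : 0 < ‖y‖ := norm_pos_iff.2 hy
    rw [pGradField, norm_gradient_norm_rpow hy, gradient_norm_rpow hy, smul_smul,
      Real.mul_rpow (abs_nonneg _) (by positivity), ← Real.rpow_mul hpos.le,
      show (s - 1) * (p - 1) - 1 = (s - 1) * (p - 2) + (s - 2) by ring, Real.rpow_add hpos]
    congr 1; ring
  rw [pLaplace, h.fderiv_eq, tr_fderiv_norm_rpow_smul hx]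
  congr 2
  ring

/-- Regularity of class `C¹`, and of class `C²` away from critical points. -/
def RegAt (u : Eu N → ℝ) (x : Eu N) : Prop :=
  ContDiffAt ℝ 1 u x ∧ (gradient u x ≠ 0 → ContDiffAt ℝ 2 u x)

lemma SolvesAt.regAt {p q : ℝ} {u : Eu N → ℝ} {x : Eu N} (h : SolvesAt p q u x) : RegAt u x :=
  ⟨h.1, fun h0 => (h.2.1 h0).of_le (by norm_num)⟩

lemma RegAt.neg {u : Eu N → ℝ} {x : Eu N} (h : RegAt u x) : RegAt (fun y => - u y) x :=
  ⟨h.1.neg, fun h0 => (h.2 (by rwa [gradient_neg', neg_ne_zero] at h0)).neg⟩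

/-- Comparison with a smooth strict barrier. -/
lemma le_of_strict_barrier {p : ℝ} (hp : 1 < p) {K : Set (Eu N)} (hK : IsCompact K) {v ψ : Eu N → ℝ}
    (hv : ContinuousOn v K) (hψ : ContinuousOn ψ K)
    (h : ∀ x ∈ K, v x ≤ ψ x ∨ (K ∈ 𝓝 x ∧ ContDiffAt ℝ 2 ψ x ∧ gradient ψ x ≠ 0 ∧ RegAt v x ∧
      (gradient v x = gradient ψ x → pLaplace p ψ x < pLaplace p v x))) :
    ∀ x ∈ K, v x ≤ ψ x := by
  intro x hx
  obtain ⟨x₁, hx₁, hmax⟩ := hK.exists_isMaxOn ⟨x, hx⟩ (hv.sub hψ)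
  rcases h x₁ hx₁ with h1 | ⟨hKn, hψ2, hg, hvr, hlt⟩
  · have : v x - ψ x ≤ v x₁ - ψ x₁ := hmax hx
    linarith
  · exfalso
    have hloc : IsLocalMax (fun y => v y - ψ y) x₁ := by
      filter_upwards [hKn] with y hy using hmax hy
    have hgrad := gradient_eq_of_isLocalMax (hvr.1.differentiableAt (by norm_num))
      (hψ2.differentiableAt (by norm_num)) hloc
    have := pLaplace_le_of_isLocalMax hp (hvr.2 (hgrad ▸ hg)) hψ2 hloc hgrad hg
    linarith [hlt hgrad]

end Barriers

section Hopf
variable {N : ℕ}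

lemma pLaplace_add_const (p : ℝ) (u : Eu N → ℝ) (c : ℝ) (x : Eu N) :
    pLaplace p (fun y => u y + c) x = pLaplace p u x := by
  rw [pLaplace, pLaplace, pGradField_add_const]

/-- The translated radial power `c |x - z|^s + a`. -/
noncomputable def radialPower (c s a : ℝ) (z : Eu N) : Eu N → ℝ := fun y => c * ‖y + -z‖ ^ s + a

lemma radialPower_apply (c s a : ℝ) (z y : Eu N) : radialPower c s a z y = c * ‖y - z‖ ^ s + a := by
  rw [radialPower, sub_eq_add_neg]

lemma contDiffAt_radialPower {x z : Eu N} (hx : x ≠ z) (c s a : ℝ) {n : WithTop ℕ∞} :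
    ContDiffAt ℝ n (radialPower c s a z) x := by
  have h : x + -z ≠ 0 := by rwa [← sub_eq_add_neg, sub_ne_zero]
  exact (ContDiffAt.comp x (contDiffAt_norm_rpow h c s) (contDiffAt_id.add contDiffAt_const)).add
    contDiffAt_const

lemma gradient_radialPower {x z : Eu N} (hx : x ≠ z) (c s a : ℝ) :
    gradient (radialPower c s a z) x = (c * s * ‖x - z‖ ^ (s - 2)) • (x - z) := by
  have h : x + -z ≠ 0 := by rwa [← sub_eq_add_neg, sub_ne_zero]
  unfold radialPower
  rw [gradient_add_const, gradient_comp_add (fun y : Eu N => c * ‖y‖ ^ s) (-z) x, gradient_norm_rpow h,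
    ← sub_eq_add_neg]

lemma norm_gradient_radialPower {x z : Eu N} (hx : x ≠ z) (c s a : ℝ) :
    ‖gradient (radialPower c s a z) x‖ = |c * s| * ‖x - z‖ ^ (s - 1) := by
  have h : x + -z ≠ 0 := by rwa [← sub_eq_add_neg, sub_ne_zero]
  unfold radialPower
  rw [gradient_add_const, gradient_comp_add (fun y : Eu N => c * ‖y‖ ^ s) (-z) x,
    norm_gradient_norm_rpow h, ← sub_eq_add_neg]

lemma gradient_radialPower_ne_zero {x z : Eu N} (hx : x ≠ z) {c s : ℝ} (hcs : c * s ≠ 0) (a : ℝ) :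
    gradient (radialPower c s a z) x ≠ 0 := by
  have : 0 < ‖x - z‖ := norm_pos_iff.2 (sub_ne_zero.2 hx)
  rw [← norm_pos_iff, norm_gradient_radialPower hx]
  have := abs_pos.2 hcs
  positivity

lemma pLaplace_radialPower {p : ℝ} {x z : Eu N} (hx : x ≠ z) (c s a : ℝ) :
    pLaplace p (radialPower c s a z) x = |c * s| ^ (p - 2) * (c * s) *
      ((N - 1 + (s - 1) * (p - 1)) * ‖x - z‖ ^ ((s - 1) * (p - 1) - 1)) := by
  have h : x + -z ≠ 0 := by rwa [← sub_eq_add_neg, sub_ne_zero]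
  unfold radialPower
  rw [pLaplace_add_const, pLaplace_comp_add p (fun y : Eu N => c * ‖y‖ ^ s) (-z) x,
    pLaplace_norm_rpow h, ← sub_eq_add_neg]

/-- Hopf-type barrier: on an annulus `radialPower (-δ) (-s) a z` is a strict supersolution when
`δ` is small. -/
lemma exists_hopf_barrier {p q ρ : ℝ} (hp : 1 < p) (hq : p - 1 < q) (hρ : 0 < ρ) (m : ℝ) (hm : 0 < m)
    (hN : 2 ≤ N) :
    ∃ δ > 0, ∃ s > 0, δ * ((ρ / 2) ^ (-s) - ρ ^ (-s)) ≤ m ∧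
      ∀ (a : ℝ) (x z : Eu N), ρ / 2 ≤ ‖x - z‖ → ‖x - z‖ ≤ ρ →
        pLaplace p (radialPower (-δ) (-s) a z) x < - ‖gradient (radialPower (-δ) (-s) a z) x‖ ^ q := by
  set s := (N : ℝ) / (p - 1) with hs
  have hp1 : 0 < p - 1 := by linarith
  have hN0 : (2 : ℝ) ≤ N := by exact_mod_cast hN
  have hs0 : 0 < s := by positivity
  have hsp : s * (p - 1) = N := by rw [hs]; field_simp
  set τ := q + 1 - p with hτ
  have hτ0 : 0 < τ := by rw [hτ]; linarith
  set e := (-s - 1) * (p - 1) - 1 - (-s - 1) * q with he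
  have hcont : ContinuousOn (fun t : ℝ => t ^ e) (Icc (ρ / 2) ρ) := fun t ht =>
    (Real.continuousAt_rpow_const _ _ (Or.inl (by linarith [ht.1] : t ≠ 0))).continuousWithinAt
  obtain ⟨t₀, ht₀, hmin⟩ := isCompact_Icc.exists_isMinOn (⟨ρ, by constructor <;> linarith⟩ : (Icc (ρ / 2) ρ).Nonempty) hcont
  have ht₀pos : 0 < t₀ := by linarith [ht₀.1]
  have hmin0 : 0 < t₀ ^ e := by positivity
  have hlim1 : Tendsto (fun δ : ℝ => δ * ((ρ / 2) ^ (-s) - ρ ^ (-s))) (𝓝[>] 0) (𝓝 0) := by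
    have : Tendsto (fun δ : ℝ => δ * ((ρ / 2) ^ (-s) - ρ ^ (-s))) (𝓝 0) (𝓝 (0 * ((ρ / 2) ^ (-s) - ρ ^ (-s)))) :=
      tendsto_id.mul_const _
    rw [zero_mul] at this
    exact this.mono_left nhdsWithin_le_nhds
  have hlim2 : Tendsto (fun δ : ℝ => (δ * s) ^ τ) (𝓝[>] 0) (𝓝 0) := by
    have : Tendsto (fun δ : ℝ => (δ * s) ^ τ) (𝓝 0) (𝓝 ((0 * s) ^ τ)) :=
      (tendsto_id.mul_const s).rpow_const (Or.inr hτ0.le)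
    rw [zero_mul, Real.zero_rpow hτ0.ne'] at this
    exact this.mono_left nhdsWithin_le_nhds
  obtain ⟨δ, ⟨h1, h2⟩, hδ⟩ := (((hlim1.eventually (ge_mem_nhds hm)).and
    (hlim2.eventually (gt_mem_nhds (mul_pos (by linarith : 0 < p) hmin0)))).and self_mem_nhdsWithin).exists
  have hδ0 : 0 < δ := hδ
  refine ⟨δ, hδ0, s, hs0, h1, fun a x z hx1 hx2 => ?_⟩
  have hR : 0 < ‖x - z‖ := by linarith
  have hne : x ≠ z := by rintro rfl; simp at hR
  rw [pLaplace_radialPower hne, norm_gradient_radialPower hne]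
  set R := ‖x - z‖
  have hRe : t₀ ^ e ≤ R ^ e := hmin ⟨hx1, hx2⟩
  have hδs : 0 < δ * s := by positivity
  rw [show -δ * -s = δ * s by ring, abs_of_pos hδs, show (N : ℝ) - 1 + (-s - 1) * (p - 1) = -p by linarith,
    Real.mul_rpow hδs.le (by positivity), ← Real.rpow_mul hR.le,
    ← Real.rpow_add_one hδs.ne', show p - 2 + 1 = p - 1 by ring]
  have e1 : (δ * s) ^ q = (δ * s) ^ (p - 1) * (δ * s) ^ τ := by
    rw [← Real.rpow_add hδs]; congr 1; ring
  have e2 : R ^ ((-s - 1) * (p - 1) - 1) = R ^ ((-s - 1) * q) * R ^ e := by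
    rw [← Real.rpow_add hR]; congr 1; ring
  have e3 : (δ * s) ^ τ < p * R ^ e := h2.trans_le (by gcongr)
  rw [e1, e2]
  have e4 : 0 < (δ * s) ^ (p - 1) * R ^ ((-s - 1) * q) := by positivity
  nlinarith [mul_lt_mul_of_pos_left e3 e4]

/-- Strong maximum principle for subsolutions of `Δ_p v = -|∇v|^q`. -/
lemma strong_max {p q : ℝ} (hN : 2 ≤ N) (hp : 1 < p) (hq : p - 1 < q) {v : Eu N → ℝ} {x₀ : Eu N}
    {r : ℝ} (hreg : ∀ x ∈ ball x₀ r, RegAt v x)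
    (hsub : ∀ x ∈ ball x₀ r, gradient v x ≠ 0 → - ‖gradient v x‖ ^ q ≤ pLaplace p v x)
    (hmax : ∀ x ∈ ball x₀ r, v x ≤ v x₀) : ∀ z ∈ ball x₀ (r / 4), v z = v x₀ := by
  intro z hz
  by_contra hne
  rw [mem_ball] at hz
  have hr : 0 < r := by
    have := dist_nonneg (x := z) (y := x₀); linarith
  have hcont : ContinuousOn v (ball x₀ r) := fun x hx => (hreg x hx).1.continuousAt.continuousWithinAt
  have hsubset : closedBall x₀ (r / 2) ⊆ ball x₀ r := closedBall_subset_ball (by linarith)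
  set E := closedBall x₀ (r / 2) ∩ v ⁻¹' {v x₀} with hE
  have hEc : IsCompact E := (isCompact_closedBall x₀ (r / 2)).of_isClosed_subset
    ((hcont.mono hsubset).preimage_isClosed_of_isClosed isClosed_closedBall isClosed_singleton)
    inter_subset_left
  have hx₀E : x₀ ∈ E := ⟨mem_closedBall_self (by linarith), rfl⟩
  obtain ⟨x₁, hx₁E, hx₁⟩ := hEc.exists_infDist_eq_dist ⟨x₀, hx₀E⟩ z
  set ρ := infDist z E with hρ
  have hρle : ρ ≤ dist z x₀ := infDist_le_dist_of_mem hx₀E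
  have hzb : z ∈ ball x₀ r := by rw [mem_ball]; linarith
  have hρ0 : 0 < ρ := by
    rw [hx₁]
    refine dist_pos.2 fun h => hne ?_
    rw [h]; exact hx₁E.2
  have hlt : ∀ x, dist x z < ρ → v x < v x₀ := by
    intro x hx
    have h1 : x ∈ closedBall x₀ (r / 2) := by
      rw [mem_closedBall]; linarith [dist_triangle x z x₀]
    refine lt_of_le_of_ne (hmax x (hsubset h1)) fun h => ?_
    have := infDist_le_dist_of_mem (x := z) (show x ∈ E from ⟨h1, h⟩)
    rw [dist_comm] at this
    linarith
  have hballsub : closedBall z ρ ⊆ ball x₀ r := by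
    intro x hx
    rw [mem_closedBall] at hx
    rw [mem_ball]
    linarith [dist_triangle x z x₀]
  obtain ⟨x₂, hx₂, hx₂max⟩ := (isCompact_closedBall z (ρ / 2)).exists_isMaxOn
    ⟨z, mem_closedBall_self (by linarith)⟩
    (hcont.mono ((closedBall_subset_closedBall (by linarith)).trans hballsub))
  have hm : 0 < v x₀ - v x₂ := by
    have := hlt x₂ (by rw [mem_closedBall] at hx₂; linarith)
    linarith
  obtain ⟨δ, hδ, s, hs, hδm, hbar⟩ := exists_hopf_barrier (N := N) hp hq hρ0 _ hm hN
  set ψ := radialPower (-δ) (-s) (v x₀ + δ * ρ ^ (-s)) z with hψ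
  have hneA : ∀ x, ρ / 2 ≤ dist x z → x ≠ z := by
    rintro x hx rfl
    rw [dist_self] at hx; linarith
  set A := closedBall z ρ ∩ {x | ρ / 2 ≤ dist x z} with hA
  have hAc : IsCompact A := (isCompact_closedBall z ρ).inter_right
    (isClosed_le continuous_const (continuous_id.dist continuous_const))
  have hcomp : ∀ x ∈ A, v x ≤ ψ x := by
    refine le_of_strict_barrier hp hAc (hcont.mono (inter_subset_left.trans hballsub))
      (fun x hx => (contDiffAt_radialPower (n := 1) (hneA x hx.2) _ _ _).continuousAt.continuousWithinAt) ?_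
    intro x hx
    have hxz := hneA x hx.2
    have hx1 : dist x z ≤ ρ := hx.1
    have hx2 : ρ / 2 ≤ dist x z := hx.2
    rcases eq_or_lt_of_le hx1 with h1 | h1
    · left
      rw [hψ, radialPower_apply, ← dist_eq_norm, h1]
      have := hmax x (hballsub hx.1)
      linarith
    rcases eq_or_lt_of_le hx2 with h2 | h2
    · left
      rw [hψ, radialPower_apply, ← dist_eq_norm, ← h2]
      have : v x ≤ v x₂ := hx₂max (by rw [mem_closedBall, ← h2])
      linarith
    · right
      refine ⟨?_, contDiffAt_radialPower hxz _ _ _, gradient_radialPower_ne_zero hxz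
        (by rw [neg_mul_neg]; positivity) _, hreg x (hballsub hx.1), fun hg => ?_⟩
      · refine inter_mem ?_ ?_
        · exact mem_of_superset (isOpen_ball.mem_nhds (mem_ball.2 h1)) ball_subset_closedBall
        · filter_upwards [(continuous_id.dist continuous_const).continuousAt.eventually (lt_mem_nhds h2)]
            with y hy using le_of_lt hy
      · have h3 := hbar (v x₀ + δ * ρ ^ (-s)) x z (by rwa [← dist_eq_norm]) (by rwa [← dist_eq_norm])
        refine h3.trans_le ?_
        rw [← hψ, ← hg]
        exact hsub x (hballsub hx.1) (hg ▸ gradient_radialPower_ne_zero hxz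
          (by rw [neg_mul_neg]; positivity) _)
  have hd1 : dist x₁ z = ρ := by rw [dist_comm, hx₁]
  have hx₁z : x₁ ≠ z := hneA x₁ (by linarith)
  have hx₁b : x₁ ∈ ball x₀ r := hsubset hx₁E.1
  have hvx₁ : v x₁ = v x₀ := hx₁E.2
  have hgrad0 : gradient v x₁ = 0 := by
    apply gradient_eq_zero_of_isLocalMax
    filter_upwards [isOpen_ball.mem_nhds hx₁b] with y hy
    rw [hvx₁]; exact hmax y hy
  have hdv : HasDerivAt (fun t : ℝ => v (x₁ + t • (z - x₁))) 0 0 := by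
    have h1 : HasFDerivAt v (fderiv ℝ v x₁) (x₁ + (0 : ℝ) • (z - x₁)) := by
      simpa using ((hreg x₁ hx₁b).1.differentiableAt (by norm_num)).hasFDerivAt
    have h2 := HasFDerivAt.comp_hasDerivAt (l := v) (0 : ℝ) h1 (hasDerivAt_line x₁ (z - x₁) 0)
    rwa [← inner_gradient_left, hgrad0, inner_zero_left] at h2
  have hdψ : HasDerivAt (fun t : ℝ => ψ (x₁ + t • (z - x₁))) (inner ℝ (gradient ψ x₁) (z - x₁)) 0 := by
    have h1 : HasFDerivAt ψ (fderiv ℝ ψ x₁) (x₁ + (0 : ℝ) • (z - x₁)) := by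
      simpa using ((contDiffAt_radialPower (n := 1) hx₁z _ _ _).differentiableAt (by norm_num)).hasFDerivAt
    have h2 := HasFDerivAt.comp_hasDerivAt (l := ψ) (0 : ℝ) h1 (hasDerivAt_line x₁ (z - x₁) 0)
    rwa [← inner_gradient_left] at h2
  have hneg : inner ℝ (gradient ψ x₁) (z - x₁) < 0 := by
    rw [hψ, gradient_radialPower hx₁z, inner_smul_left, ← neg_sub x₁ z, inner_neg_right,
      real_inner_self_eq_norm_sq, ← dist_eq_norm, hd1, neg_mul_neg]
    simp only [conj_trivial]
    rw [mul_neg, neg_lt_zero]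
    positivity
  have hd := hdv.sub hdψ
  rw [zero_sub] at hd
  have hpos : ∀ᶠ t in 𝓝[>] (0 : ℝ), 0 < slope (fun t : ℝ => v (x₁ + t • (z - x₁)) - ψ (x₁ + t • (z - x₁))) 0 t :=
    ((hasDerivAt_iff_tendsto_slope.1 hd).mono_left (nhdsWithin_mono _ fun t ht => ne_of_gt ht)).eventually
      (lt_mem_nhds (neg_pos.2 hneg))
  have hsmall : ∀ᶠ t in 𝓝[>] (0 : ℝ), t < 1 / 2 :=
    nhdsWithin_le_nhds (gt_mem_nhds (by norm_num))
  obtain ⟨t, ⟨ht1, ht2⟩, ht3⟩ := ((hpos.and hsmall).and self_mem_nhdsWithin).exists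
  have ht0 : 0 < t := ht3
  rw [slope_def_field, sub_zero] at ht1
  have hψx₁ : ψ x₁ = v x₁ := by
    rw [hψ, radialPower_apply, ← dist_eq_norm, hd1, hvx₁]; ring
  have h5 := (div_pos_iff_of_pos_right ht0).1 ht1
  simp only [zero_smul, add_zero, hψx₁, sub_self, sub_zero] at h5
  have hdist : dist (x₁ + t • (z - x₁)) z = (1 - t) * ρ := by
    rw [dist_eq_norm, show x₁ + t • (z - x₁) - z = (1 - t) • (x₁ - z) by module, norm_smul,
      Real.norm_eq_abs, abs_of_pos (by linarith), ← dist_eq_norm, hd1]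
  have := hcomp (x₁ + t • (z - x₁)) ⟨by rw [mem_closedBall, hdist]; nlinarith, by
    change ρ / 2 ≤ dist (x₁ + t • (z - x₁)) z
    rw [hdist]; nlinarith⟩
  linarith

end Hopf

section Comparison
variable {N : ℕ}

lemma RegAt.comp_add {w : Eu N → ℝ} {a x : Eu N} (h : RegAt w (x + a)) :
    RegAt (fun y => w (y + a)) x := by
  refine ⟨ContDiffAt.comp x h.1 (contDiffAt_id.add contDiffAt_const), fun h0 => ?_⟩
  rw [gradient_comp_add] at h0
  exact ContDiffAt.comp x (h.2 h0) (contDiffAt_id.add contDiffAt_const)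

/-- The doubling step: a positive interior maximum of `u - w` is stable under small shifts. -/
lemma sub_shift_le {p q : ℝ} (hp : 1 < p) {Ω K K' : Set (Eu N)} (hK' : IsCompact K')
    (hKK' : ∀ x ∈ K, K' ∈ 𝓝 x) {r S d : ℝ} (hr : 0 < r) (hd : d < S)
    (hΩ : ∀ x ∈ K', ∀ a : Eu N, ‖a‖ ≤ r → x + a ∈ Ω) {u w : Eu N → ℝ}
    (hu : ∀ x ∈ Ω, RegAt u x) (hw : ∀ x ∈ Ω, RegAt w x)
    (hsub : ∀ x ∈ Ω, gradient u x ≠ 0 → ‖gradient u x‖ ^ q ≤ pLaplace p u x)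
    (hsup : ∀ x ∈ Ω, gradient w x ≠ 0 → pLaplace p w x < ‖gradient w x‖ ^ q)
    (hS : ∀ x ∈ Ω, u x - w x ≤ S)
    (hbd : ∀ x ∈ K', x ∉ K → ∀ a : Eu N, ‖a‖ ≤ r → u x - w (x + a) ≤ d) :
    ∀ x ∈ K', ∀ a : Eu N, ‖a‖ < r → u x - w (x + a) ≤ S := by
  intro x' hx' a' ha'
  by_contra! hcon
  have hΩ0 : ∀ x ∈ K', x ∈ Ω := fun x hx => by simpa using hΩ x hx 0 (by simpa using hr.le)
  set P := K' ×ˢ closedBall (0 : Eu N) r with hP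
  have hPc : IsCompact P := hK'.prod (isCompact_closedBall _ _)
  have hmem : ∀ z : Eu N × Eu N, z ∈ P → z.1 ∈ K' ∧ ‖z.2‖ ≤ r := fun z hz =>
    ⟨hz.1, by simpa using hz.2⟩
  have hc : ContinuousOn (fun z : Eu N × Eu N => u z.1 - w (z.1 + z.2)) P := by
    intro z hz
    obtain ⟨h1, h2⟩ := hmem z hz
    refine (ContinuousAt.sub ?_ ?_).continuousWithinAt
    · exact ContinuousAt.comp (hu _ (hΩ0 _ h1)).1.continuousAt continuous_fst.continuousAt
    · exact ContinuousAt.comp (f := fun z : Eu N × Eu N => z.1 + z.2) (hw _ (hΩ _ h1 _ h2)).1.continuousAt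
        (by fun_prop : Continuous fun z : Eu N × Eu N => z.1 + z.2).continuousAt
  have hP0 : (x', a') ∈ P := ⟨hx', by simpa using ha'.le⟩
  obtain ⟨z₀, -, hz₀⟩ := hPc.exists_isMaxOn ⟨_, hP0⟩ hc
  set M := u z₀.1 - w (z₀.1 + z₀.2) with hM
  have hM1 : S < M := hcon.trans_le (hz₀ hP0)
  set A := M - S + 1 with hA
  have hA0 : 0 < A := by linarith
  set e := u x' - w (x' + a') - S with he
  have he0 : 0 < e := by linarith
  have hθ : ‖a'‖ ^ 2 / r ^ 2 < 1 := by
    rw [div_lt_one (by positivity)]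
    gcongr
  obtain ⟨m, hm⟩ := exists_pow_lt_of_lt_one (show 0 < e / A by positivity) hθ
  have hmpos : m ≠ 0 := by
    rintro rfl
    rw [pow_zero, lt_div_iff₀ hA0] at hm
    have : u x' - w (x' + a') ≤ M := hz₀ hP0
    linarith
  set φ : Eu N → ℝ := fun a => A * (‖a‖ ^ 2 / r ^ 2) ^ m with hφ
  have hφc : Continuous φ := by fun_prop
  obtain ⟨⟨x₁, a₁⟩, hz₁, hmax⟩ := hPc.exists_isMaxOn ⟨_, hP0⟩
    (hc.sub (hφc.comp continuous_snd).continuousOn)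
  obtain ⟨hx₁, ha₁⟩ := hmem _ hz₁
  simp only at hx₁ ha₁
  have hmax' : ∀ x ∈ K', ∀ a : Eu N, ‖a‖ ≤ r → u x - w (x + a) - φ a ≤ u x₁ - w (x₁ + a₁) - φ a₁ :=
    fun x hx a ha => hmax (show (x, a) ∈ P from ⟨hx, by simpa using ha⟩)
  have hbig : S < u x₁ - w (x₁ + a₁) - φ a₁ := by
    refine lt_of_lt_of_le ?_ (hmax' x' hx' a' ha'.le)
    have : φ a' < e := by
      rw [hφ]; rw [lt_div_iff₀ hA0] at hm; linarith
    linarith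
  have hφ0 : 0 ≤ φ a₁ := by positivity
  have ha₁r : ‖a₁‖ < r := by
    refine lt_of_le_of_ne ha₁ fun h => ?_
    have h1 : φ a₁ = A := by simp [hφ, h, hr.ne']
    have h2 : u x₁ - w (x₁ + a₁) ≤ M := hz₀ hz₁
    linarith
  have ha₁0 : a₁ ≠ 0 := by
    rintro rfl
    have := hS x₁ (hΩ0 _ hx₁)
    rw [add_zero] at hbig
    linarith
  have hx₁K : x₁ ∈ K := by
    by_contra h
    have := hbd x₁ hx₁ h a₁ ha₁
    linarith
  have hwr := hw _ (hΩ _ hx₁ _ ha₁)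
  have hur := hu _ (hΩ0 _ hx₁)
  have hgw : gradient w (x₁ + a₁) ≠ 0 := by
    intro h0
    have hmaxa : IsLocalMax (fun t : ℝ => u x₁ - w (x₁ + a₁ + t • a₁) - φ (a₁ + t • a₁)) 0 := by
      have : ∀ᶠ t in 𝓝 (0 : ℝ), ‖a₁ + t • a₁‖ < r :=
        (tendsto_line a₁ a₁).norm.eventually (gt_mem_nhds ha₁r)
      filter_upwards [this] with t ht
      have := hmax' x₁ hx₁ _ ht.le
      simpa [add_assoc] using this
    have hd1 : HasDerivAt (fun t : ℝ => w (x₁ + a₁ + t • a₁)) 0 0 := by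
      have h1 : HasFDerivAt w (fderiv ℝ w (x₁ + a₁)) (x₁ + a₁ + (0 : ℝ) • a₁) := by
        simpa using (hwr.1.differentiableAt (by norm_num)).hasFDerivAt
      have h2 := HasFDerivAt.comp_hasDerivAt (l := w) (0 : ℝ) h1 (hasDerivAt_line (x₁ + a₁) a₁ 0)
      rwa [← inner_gradient_left, h0, inner_zero_left] at h2
    have hφt : ∀ t : ℝ, φ (a₁ + t • a₁) = φ a₁ * ((1 + t) ^ 2) ^ m := by
      intro t
      rw [hφ]
      simp only
      rw [show a₁ + t • a₁ = (1 + t) • a₁ by module, norm_smul, mul_pow, Real.norm_eq_abs, sq_abs,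
        mul_div_assoc, mul_pow]
      ring
    have hd2 : HasDerivAt (fun t : ℝ => φ (a₁ + t • a₁)) (φ a₁ * (2 * m)) 0 := by
      simp only [hφt]
      have := (((((hasDerivAt_id (0 : ℝ)).const_add 1).fun_pow 2).fun_pow m)).const_mul (φ a₁)
      simp only [id, add_zero, one_pow, mul_one] at this
      exact this.congr_deriv (by push_cast; ring)
    have h3 := hmaxa.hasDerivAt_eq_zero ((hd1.const_sub (u x₁)).sub hd2)
    have h4 : 0 < φ a₁ := by
      have := norm_pos_iff.2 ha₁0
      positivity
    have h5 : (0 : ℝ) < m := by exact_mod_cast Nat.pos_of_ne_zero hmpos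
    have := mul_pos h4 (mul_pos two_pos h5)
    linarith
  have hloc : IsLocalMax (fun y => u y - w (y + a₁)) x₁ := by
    filter_upwards [hKK' x₁ hx₁K] with y hy
    have := hmax' y hy a₁ ha₁
    linarith
  have hwr' := hwr.comp_add
  have hgr := gradient_eq_of_isLocalMax (hur.1.differentiableAt (by norm_num))
    (hwr'.1.differentiableAt (by norm_num)) hloc
  have hgw' : gradient (fun y => w (y + a₁)) x₁ ≠ 0 := by rwa [gradient_comp_add]
  have hgu : gradient u x₁ ≠ 0 := hgr ▸ hgw'
  have h1 := pLaplace_le_of_isLocalMax hp (hur.2 hgu) (hwr'.2 hgw') hloc hgr hgw'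
  rw [pLaplace_comp_add] at h1
  have h2 := hsub _ (hΩ0 _ hx₁) hgu
  have h3 := hsup _ (hΩ _ hx₁ _ ha₁) hgw
  rw [hgr, gradient_comp_add] at h2
  linarith

/-- Comparison principle for subsolutions and strict supersolutions. -/
theorem comparison {p q : ℝ} (hN : 2 ≤ N) (hp : 1 < p) (hq : p - 1 < q) {Ω K : Set (Eu N)} (hΩo : IsOpen Ω)
    (hK : IsCompact K) (hKΩ : K ⊆ Ω) {u w : Eu N → ℝ}
    (hu : ∀ x ∈ Ω, RegAt u x) (hw : ∀ x ∈ Ω, RegAt w x)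
    (hsub : ∀ x ∈ Ω, gradient u x ≠ 0 → ‖gradient u x‖ ^ q ≤ pLaplace p u x)
    (hsup : ∀ x ∈ Ω, gradient w x ≠ 0 → pLaplace p w x < ‖gradient w x‖ ^ q)
    {c : ℝ} (hc : ∀ x ∈ Ω, x ∉ K → u x - w x ≤ c) : ∀ x ∈ Ω, u x - w x ≤ c := by
  intro x hx
  by_contra! hcon
  have hcu : ContinuousOn u Ω := fun y hy => (hu y hy).1.continuousAt.continuousWithinAt
  have hcw : ContinuousOn w Ω := fun y hy => (hw y hy).1.continuousAt.continuousWithinAt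
  have hxK : x ∈ K := by
    by_contra h
    linarith [hc x hx h]
  obtain ⟨x₀, hx₀K, hx₀max⟩ := hK.exists_isMaxOn ⟨x, hxK⟩ ((hcu.sub hcw).mono hKΩ)
  set S := u x₀ - w x₀ with hS
  have hcS : c < S := hcon.trans_le (hx₀max hxK)
  have hSΩ : ∀ y ∈ Ω, u y - w y ≤ S := by
    intro y hy
    by_cases h : y ∈ K
    · exact hx₀max h
    · linarith [hc y hy h]
  obtain ⟨r₀, hr₀, hr₀Ω⟩ := hK.exists_cthickening_subset_open hΩo hKΩ
  have hTc : IsCompact (cthickening r₀ K) := hK.cthickening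
  have huc := hTc.uniformContinuousOn_of_continuous (hcw.mono hr₀Ω)
  rw [Metric.uniformContinuousOn_iff] at huc
  obtain ⟨ρ, hρ, hρw⟩ := huc ((S - c) / 2) (by linarith)
  set r := min (r₀ / 2) (ρ / 2) with hr
  have hr0 : 0 < r := by positivity
  have hrr₀ : r ≤ r₀ / 2 := min_le_left _ _
  have hrρ : r < ρ := (min_le_right _ _).trans_lt (by linarith)
  set K' := cthickening (r₀ / 2) K with hK'
  have hK'T : ∀ y ∈ K', ∀ a : Eu N, ‖a‖ ≤ r → y + a ∈ cthickening r₀ K := by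
    intro y hy a ha
    have h1 := cthickening_cthickening_subset (ε := r₀ / 2) (δ := r₀ / 2) (by linarith) (by linarith) K
    rw [add_halves] at h1
    refine h1 (mem_cthickening_of_dist_le _ y _ _ hy ?_)
    rw [dist_eq_norm]; simpa using ha.trans hrr₀
  have hK'Ω : ∀ y ∈ K', ∀ a : Eu N, ‖a‖ ≤ r → y + a ∈ Ω := fun y hy a ha => hr₀Ω (hK'T y hy a ha)
  have hKK' : ∀ y ∈ K, K' ∈ 𝓝 y := fun y hy =>
    mem_of_superset (isOpen_thickening.mem_nhds (self_subset_thickening (half_pos hr₀) K hy))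
      (thickening_subset_cthickening _ _)
  have key := sub_shift_le hp hK.cthickening hKK' hr0 (show c + (S - c) / 2 < S by linarith) hK'Ω hu hw
    hsub hsup hSΩ (by
      intro y hy hyK a ha
      have h0 : y ∈ cthickening r₀ K := by simpa using hK'T y hy 0 (by simpa using hr0.le)
      have h1 := hρw y h0 (y + a) (hK'T y hy a ha) (by
        rw [dist_eq_norm]; simpa using ha.trans_lt hrρ)
      have h2 := hc y (hr₀Ω h0) hyK
      rw [Real.dist_eq] at h1
      linarith [(abs_lt.1 h1).2])
  set E := {y | y ∈ K ∧ u y - w y = S} with hE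
  have hEK : E ⊆ K := fun y hy => hy.1
  have hEclosed : IsClosed E := by
    have : E = K ∩ (fun y => u y - w y) ⁻¹' {S} := rfl
    rw [this]
    exact ((hcu.sub hcw).mono hKΩ).preimage_isClosed_of_isClosed hK.isClosed isClosed_singleton
  have hEopen : IsOpen E := by
    rw [isOpen_iff_mem_nhds]
    rintro y ⟨hyK, hyS⟩
    obtain ⟨ε, hε, hεK⟩ := Metric.mem_nhds_iff.1 (hKK' y hyK)
    set s := min ε r with hs
    have hs0 : 0 < s := lt_min hε hr0
    have hsΩ : ∀ z ∈ ball y s, z ∈ Ω := fun z hz => by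
      simpa using hK'Ω z (hεK (ball_subset_ball (min_le_left _ _) hz)) 0 (by simpa using hr0.le)
    have hnorm : ∀ z ∈ ball y s, ‖z - y‖ < r := fun z hz => by
      rw [← dist_eq_norm]; exact (mem_ball.1 hz).trans_le (min_le_right _ _)
    have hu1 : ∀ z ∈ ball y (s / 4), u z = u y := by
      refine strong_max hN hp hq (fun z hz => hu z (hsΩ z hz)) (fun z hz h0 => ?_) (fun z hz => ?_)
      · have := hsub z (hsΩ z hz) h0
        have h2 : 0 ≤ ‖gradient u z‖ ^ q := by positivity
        linarith
      · have := key z (hεK (ball_subset_ball (min_le_left _ _) hz)) (y - z) (by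
          rw [norm_sub_rev]; exact hnorm z hz)
        rw [add_sub_cancel] at this
        linarith
    have hw1 : ∀ z ∈ ball y (s / 4), - w z = - w y := by
      refine strong_max hN hp hq (v := fun z => - w z) (fun z hz => (hw z (hsΩ z hz)).neg) (fun z hz h0 => ?_)
        (fun z hz => ?_)
      · rw [gradient_neg', neg_ne_zero] at h0
        rw [gradient_neg', norm_neg, pLaplace_neg]
        exact neg_le_neg (hsup z (hsΩ z hz) h0).le
      · have := key y (mem_of_mem_nhds (hKK' y hyK)) (z - y) (hnorm z hz)
        rw [add_sub_cancel] at this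
        linarith
    filter_upwards [ball_mem_nhds y (show 0 < s / 4 by positivity)] with z hz
    have h1 : u z - w z = S := by rw [hu1 z hz, neg_injective (hw1 z hz), hyS]
    refine ⟨?_, h1⟩
    by_contra h
    have := hc z (hsΩ z (ball_subset_ball (by linarith) hz)) h
    linarith
  have : Nonempty (Fin N) := ⟨⟨0, by omega⟩⟩
  rcases isClopen_iff.1 ⟨hEclosed, hEopen⟩ with h | h
  · exact (h ▸ (⟨hx₀K, rfl⟩ : x₀ ∈ E) : x₀ ∈ (∅ : Set (Eu N)))
  · exact noncompact_univ (Eu N) (hK.of_isClosed_subset (h ▸ hEclosed) (h ▸ hEK))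

end Comparison

section Punctured
variable {N : ℕ}

lemma norm_fderiv_eq_norm_gradient (f : Eu N → ℝ) (x : Eu N) : ‖fderiv ℝ f x‖ = ‖gradient f x‖ := by
  simp [gradient]

/-- Gradient bounds for nonnegative solutions on the punctured space. -/
lemma exists_gradient_bounds_punctured {p q : ℝ} (hN : 2 ≤ N) (hp : 1 < p) (hq : p - 1 < q) (hqp : q < p) :
    ∃ K > 0, ∀ u : Eu N → ℝ, (∀ x ≠ 0, SolvesAt p q u x) → (∀ x ≠ 0, 0 ≤ u x) → ∀ x ≠ 0,
      (∀ δ > 0, ‖gradient u x‖ ≤ K * ((u x + δ) / ‖x‖)) ∧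
      ‖gradient u x‖ ≤ K * ‖x‖ ^ (-(1 / (q + 1 - p))) := by
  obtain ⟨K, hK, hKb⟩ := gradient_bounds (N := N) hN hp hq hqp
  set α := 1 / (q + 1 - p) with hα
  have hα0 : 0 < α := by rw [hα]; apply one_div_pos.2; linarith
  refine ⟨max (2 * K) (K * (1 / 2) ^ (-α)), lt_max_of_lt_left (by linarith), fun u hS hpos x hx => ?_⟩
  have hxp : 0 < ‖x‖ := norm_pos_iff.2 hx
  have hne : ∀ y ∈ closedBall x (‖x‖ / 2), y ≠ 0 := by
    rintro y hy rfl
    rw [mem_closedBall, dist_zero_left] at hy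
    linarith
  have key : ∀ δ > 0, ‖gradient u x‖ ≤ K * ((u x + δ) / (‖x‖ / 2)) ∧
      ‖gradient u x‖ ≤ K * (‖x‖ / 2) ^ (-α) := by
    intro δ hδ
    have := hKb (fun y => u y + δ) x (‖x‖ / 2) (by linarith) (fun y hy => by
        filter_upwards [isOpen_ne.mem_nhds (hne y hy)] with z hz using (hS z hz).add_const δ)
      (fun y hy => by linarith [hpos y (hne y hy)])
    rwa [gradient_add_const] at this
  constructor
  · intro δ hδ
    refine (key δ hδ).1.trans ?_
    have h1 : 0 ≤ (u x + δ) / ‖x‖ := div_nonneg (by linarith [hpos x hx]) hxp.le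
    calc K * ((u x + δ) / (‖x‖ / 2)) = 2 * K * ((u x + δ) / ‖x‖) := by field_simp
      _ ≤ _ := by gcongr; exact le_max_left _ _
  · refine (key 1 one_pos).2.trans ?_
    rw [div_eq_mul_one_div, Real.mul_rpow hxp.le (by norm_num), mul_comm (‖x‖ ^ (-α)), ← mul_assoc]
    gcongr
    exact le_max_right _ _

lemma le_norm_of_mem_segment {x y z : Eu N} {r : ℝ} (hx : ‖x‖ = r) (hy : ‖y‖ = r)
    (hxy : 0 ≤ inner ℝ x y) (hz : z ∈ segment ℝ x y) : r / 2 ≤ ‖z‖ := by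
  obtain ⟨a, b, ha, hb, hab, rfl⟩ := hz
  have h1 : ‖a • x + b • y‖ ^ 2 = a ^ 2 * r ^ 2 + 2 * (a * b * inner ℝ x y) + b ^ 2 * r ^ 2 := by
    rw [norm_add_sq_real, norm_smul, norm_smul, inner_smul_left, inner_smul_right, hx, hy, mul_pow,
      mul_pow, Real.norm_eq_abs, Real.norm_eq_abs, sq_abs, sq_abs]
    simp only [conj_trivial]
    ring
  have h2 : 0 ≤ a * b * inner ℝ x y := by positivity
  refine le_of_sq_le_sq ?_ (norm_nonneg _)
  have h3 : 1 / 4 ≤ a ^ 2 + b ^ 2 := by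
    have : b = 1 - a := by linarith
    subst this
    nlinarith [sq_nonneg (2 * a - 1)]
  have h4 : 1 / 4 * r ^ 2 ≤ (a ^ 2 + b ^ 2) * r ^ 2 := by gcongr
  rw [h1]
  nlinarith

lemma exists_orthogonal_of_norm (hN : 2 ≤ N) (x : Eu N) {r : ℝ} (hr : 0 ≤ r) :
    ∃ z : Eu N, ‖z‖ = r ∧ inner ℝ x z = 0 := by
  have h1 : (ℝ ∙ x)ᗮ ≠ ⊥ := by
    intro h
    have h2 := Submodule.finrank_add_finrank_orthogonal (ℝ ∙ x)
    rw [h, finrank_bot, finrank_euclideanSpace_fin] at h2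
    have := finrank_span_le_card (R := ℝ) ({x} : Set (Eu N))
    simp only [toFinset_singleton, Finset.card_singleton] at this
    omega
  obtain ⟨y, hy, hy0⟩ := Submodule.exists_mem_ne_zero_of_ne_bot h1
  have hyp := norm_pos_iff.2 hy0
  refine ⟨(r / ‖y‖) • y, ?_, ?_⟩
  · rw [norm_smul, Real.norm_eq_abs, abs_of_nonneg (by positivity), div_mul_cancel₀ _ hyp.ne']
  · rw [inner_smul_right, Submodule.mem_orthogonal_singleton_iff_inner_right.1 hy, mul_zero]

/-- Oscillation on spheres. -/
lemma abs_sub_le_on_sphere (hN : 2 ≤ N) {f : Eu N → ℝ} {r B : ℝ} (hr : 0 < r)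
    (hf : ∀ z, r / 2 ≤ ‖z‖ → DifferentiableAt ℝ f z)
    (hB : ∀ z, r / 2 ≤ ‖z‖ → ‖gradient f z‖ ≤ B) {x y : Eu N} (hx : ‖x‖ = r) (hy : ‖y‖ = r) :
    |f x - f y| ≤ 4 * B * r := by
  have hB0 : 0 ≤ B := (norm_nonneg _).trans (hB x (by linarith))
  have key : ∀ x y : Eu N, ‖x‖ = r → ‖y‖ = r → 0 ≤ inner ℝ x y → |f y - f x| ≤ 2 * B * r := by
    intro x y hx hy hxy
    have := Convex.norm_image_sub_le_of_norm_fderiv_le (𝕜 := ℝ) (f := f) (C := B)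
      (fun z hz => hf z (le_norm_of_mem_segment hx hy hxy hz))
      (fun z hz => by
        rw [norm_fderiv_eq_norm_gradient]
        exact hB z (le_norm_of_mem_segment hx hy hxy hz))
      (convex_segment x y) (left_mem_segment ℝ x y) (right_mem_segment ℝ x y)
    rw [Real.norm_eq_abs] at this
    refine this.trans ?_
    have : ‖y - x‖ ≤ 2 * r := (norm_sub_le _ _).trans (by rw [hx, hy]; linarith)
    nlinarith
  obtain ⟨z, hz, hxz⟩ := exists_orthogonal_of_norm hN x hr.le
  have main : ∀ z : Eu N, ‖z‖ = r → inner ℝ x z = 0 → 0 ≤ inner ℝ z y → |f x - f y| ≤ 4 * B * r := by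
    intro z hz hxz hzy
    have h1 := key x z hx hz hxz.ge
    have h2 := key z y hz hy hzy
    rw [abs_le] at *
    constructor <;> linarith
  rcases le_total 0 (inner ℝ z y) with h | h
  · exact main z hz hxz h
  · exact main (-z) (by rwa [norm_neg]) (by rw [inner_neg_right, hxz, neg_zero])
      (by rw [inner_neg_left]; linarith)

lemma abs_sub_le_on_ray {f : Eu N → ℝ} {C β : ℝ} (hβ : 0 < β) (hC : 0 ≤ C)
    (hf : ∀ z ≠ 0, DifferentiableAt ℝ f z)
    (hB : ∀ z ≠ 0, ‖gradient f z‖ ≤ C * ‖z‖ ^ (-β - 1)) {x : Eu N} (hx : x ≠ 0) {t : ℝ} (ht : 1 ≤ t) :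
    |f (t • x) - f x| ≤ C / β * ‖x‖ ^ (-β) := by
  have hxp : 0 < ‖x‖ := norm_pos_iff.2 hx
  have hd : ∀ s > (0 : ℝ), HasDerivAt (fun s : ℝ => f (s • x)) (inner ℝ (gradient f (s • x)) x) s := by
    intro s hs
    have h1 := (hf (s • x) (smul_ne_zero hs.ne' hx)).hasFDerivAt
    have h2 : HasDerivAt (fun s : ℝ => s • x) x s := by
      simpa using (hasDerivAt_id s).smul_const x
    rw [inner_gradient_left]
    exact HasFDerivAt.comp_hasDerivAt (l := f) s h1 h2
  have hb : ∀ s > (0 : ℝ), |inner ℝ (gradient f (s • x)) x| ≤ C * ‖x‖ ^ (-β) * s ^ (-β - 1) := by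
    intro s hs
    refine (abs_real_inner_le_norm _ _).trans ?_
    have h1 := hB (s • x) (smul_ne_zero hs.ne' hx)
    rw [norm_smul, Real.norm_eq_abs, abs_of_pos hs, Real.mul_rpow hs.le hxp.le] at h1
    have h2 : ‖x‖ ^ (-β) = ‖x‖ ^ (-β - 1) * ‖x‖ := by
      rw [← Real.rpow_add_one hxp.ne']; congr 1; ring
    rw [h2]
    have := mul_le_mul_of_nonneg_right h1 hxp.le
    linarith
  have hp : ∀ s > (0 : ℝ), HasDerivAt (fun s : ℝ => C * ‖x‖ ^ (-β) * (s ^ (-β) / -β))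
      (C * ‖x‖ ^ (-β) * s ^ (-β - 1)) s := by
    intro s hs
    have := ((Real.hasDerivAt_rpow_const (p := -β) (Or.inl hs.ne')).div_const (-β)).const_mul
      (C * ‖x‖ ^ (-β))
    exact this.congr_deriv (by field_simp)
  have hsub : ∀ s ∈ Icc 1 t, (0 : ℝ) < s := fun s hs => by linarith [hs.1]
  have hinterior : ∀ s ∈ interior (Icc 1 t), (0 : ℝ) < s := fun s hs => hsub s (interior_subset hs)
  have m1 : MonotoneOn (fun s : ℝ => C * ‖x‖ ^ (-β) * (s ^ (-β) / -β) - f (s • x)) (Icc 1 t) := by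
    refine monotoneOn_of_hasDerivWithinAt_nonneg (convex_Icc _ _)
      (fun s hs => ((hp s (hsub s hs)).sub (hd s (hsub s hs))).continuousAt.continuousWithinAt)
      (fun s hs => ((hp s (hinterior s hs)).sub (hd s (hinterior s hs))).hasDerivWithinAt) (fun s hs => ?_)
    linarith [(abs_le.1 (hb s (hinterior s hs))).2]
  have m2 : MonotoneOn (fun s : ℝ => C * ‖x‖ ^ (-β) * (s ^ (-β) / -β) + f (s • x)) (Icc 1 t) := by
    refine monotoneOn_of_hasDerivWithinAt_nonneg (convex_Icc _ _)
      (fun s hs => ((hp s (hsub s hs)).add (hd s (hsub s hs))).continuousAt.continuousWithinAt)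
      (fun s hs => ((hp s (hinterior s hs)).add (hd s (hinterior s hs))).hasDerivWithinAt) (fun s hs => ?_)
    linarith [(abs_le.1 (hb s (hinterior s hs))).1]
  have e1 := m1 (left_mem_Icc.2 ht) (right_mem_Icc.2 ht) ht
  have e2 := m2 (left_mem_Icc.2 ht) (right_mem_Icc.2 ht) ht
  simp only [one_smul, Real.one_rpow] at e1 e2
  have e3 : C * ‖x‖ ^ (-β) * (t ^ (-β) / -β) ≤ 0 := by
    have : 0 < t := by linarith
    rw [div_neg, mul_neg, neg_nonpos]
    positivity
  have e4 : C * ‖x‖ ^ (-β) * (1 / -β) = - (C / β * ‖x‖ ^ (-β)) := by field_simp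
  rw [e4] at e1 e2
  rw [abs_le]
  constructor <;> linarith

/-- Functions whose gradient decays fast enough have a limit at infinity. -/
lemma exists_tendsto_cocompact (hN : 2 ≤ N) {f : Eu N → ℝ} {C β : ℝ} (hβ : 0 < β) (hC : 0 ≤ C)
    (hf : ∀ z ≠ 0, DifferentiableAt ℝ f z)
    (hB : ∀ z ≠ 0, ‖gradient f z‖ ≤ C * ‖z‖ ^ (-β - 1)) :
    ∃ M, Tendsto f (cocompact (Eu N)) (𝓝 M) := by
  set D := C / β + 4 * (C * (1 / 2) ^ (-β - 1)) with hD
  have hD0 : 0 ≤ D := by positivity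
  have hne : ∀ {r : ℝ} {z : Eu N}, 0 < r → r / 2 ≤ ‖z‖ → z ≠ 0 := by
    rintro r z hr hz rfl
    rw [norm_zero] at hz; linarith
  have key : ∀ x y : Eu N, x ≠ 0 → ‖x‖ ≤ ‖y‖ → |f x - f y| ≤ D * ‖x‖ ^ (-β) := by
    intro x y hx hxy
    have hxp : 0 < ‖x‖ := norm_pos_iff.2 hx
    have hyp : 0 < ‖y‖ := hxp.trans_le hxy
    set z := (‖x‖ / ‖y‖) • y with hz
    have hzn : ‖z‖ = ‖x‖ := by
      rw [hz, norm_smul, Real.norm_eq_abs, abs_of_pos (by positivity), div_mul_cancel₀ _ hyp.ne']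
    have hz0 : z ≠ 0 := norm_pos_iff.1 (hzn ▸ hxp)
    have h1 := abs_sub_le_on_ray hβ hC hf hB hz0 (t := ‖y‖ / ‖x‖) ((one_le_div hxp).2 hxy)
    have h2 : (‖y‖ / ‖x‖) • z = y := by
      rw [hz, smul_smul, div_mul_div_cancel₀ hxp.ne', div_self hyp.ne', one_smul]
    rw [h2, hzn] at h1
    have h3 := abs_sub_le_on_sphere hN hxp (fun w hw => hf w (hne hxp hw))
      (B := C * (1 / 2) ^ (-β - 1) * ‖x‖ ^ (-β - 1)) (fun w hw => by
        refine (hB w (hne hxp hw)).trans ?_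
        have : ‖w‖ ^ (-β - 1) ≤ (1 / 2 * ‖x‖) ^ (-β - 1) :=
          Real.rpow_le_rpow_of_nonpos (by positivity) (by linarith) (by linarith)
        rw [Real.mul_rpow (by norm_num) hxp.le] at this
        rw [mul_assoc]
        gcongr) rfl hzn
    have h4 : ‖x‖ ^ (-β) = ‖x‖ ^ (-β - 1) * ‖x‖ := by
      rw [← Real.rpow_add_one hxp.ne']; congr 1; ring
    have h5 : 4 * (C * (1 / 2) ^ (-β - 1) * ‖x‖ ^ (-β - 1)) * ‖x‖ =
        4 * (C * (1 / 2) ^ (-β - 1)) * ‖x‖ ^ (-β) := by rw [h4]; ring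
    rw [h5] at h3
    rw [hD, add_mul]
    rw [abs_le] at *
    constructor <;> linarith
  have : Nonempty (Fin N) := ⟨⟨0, by omega⟩⟩
  refine cauchy_map_iff_exists_tendsto.1 (Metric.cauchy_iff.2 ⟨inferInstance, fun ε hε => ?_⟩)
  have hlim : Tendsto (fun x : Eu N => D * ‖x‖ ^ (-β)) (cocompact (Eu N)) (𝓝 (D * 0)) :=
    ((tendsto_rpow_neg_atTop hβ).comp (tendsto_norm_cocompact_atTop (E := Eu N))).const_mul D
  rw [mul_zero] at hlim
  have hev : {x : Eu N | D * ‖x‖ ^ (-β) < ε ∧ 0 < ‖x‖} ∈ cocompact (Eu N) :=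
    (hlim.eventually (gt_mem_nhds hε)).and
      ((tendsto_norm_cocompact_atTop (E := Eu N)).eventually (eventually_gt_atTop 0))
  refine ⟨_, image_mem_map hev, ?_⟩
  rintro _ ⟨x, ⟨hx1, hx2⟩, rfl⟩ _ ⟨y, ⟨hy1, hy2⟩, rfl⟩
  rw [Real.dist_eq]
  rcases le_total ‖x‖ ‖y‖ with h | h
  · exact (key x y (norm_pos_iff.1 hx2) h).trans_lt hx1
  · rw [abs_sub_comm]
    exact (key y x (norm_pos_iff.1 hy2) h).trans_lt hy1

/-- Harnack inequality on spheres. -/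
lemma exists_harnack {p q : ℝ} (hN : 2 ≤ N) (hp : 1 < p) (hq : p - 1 < q) (hqp : q < p) :
    ∃ C > 0, ∀ u : Eu N → ℝ, (∀ x ≠ 0, SolvesAt p q u x) → (∀ x ≠ 0, 0 ≤ u x) → ∀ x y : Eu N, x ≠ 0 →
      ‖x‖ = ‖y‖ → u y + 1 ≤ C * (u x + 1) := by
  obtain ⟨K, hK, hKb⟩ := exists_gradient_bounds_punctured (N := N) hN hp hq hqp
  refine ⟨Real.exp (8 * K), Real.exp_pos _, fun u hS hpos x y hx hxy => ?_⟩
  have hxp : 0 < ‖x‖ := norm_pos_iff.2 hx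
  have hy : y ≠ 0 := norm_pos_iff.1 (hxy ▸ hxp)
  have hne : ∀ {z : Eu N}, ‖x‖ / 2 ≤ ‖z‖ → z ≠ 0 := by
    rintro z hz rfl
    rw [norm_zero] at hz; linarith
  have hd : ∀ z ≠ 0, HasFDerivAt (fun y => Real.log (u y + 1)) ((u z + 1)⁻¹ • fderiv ℝ u z) z :=
    fun z hz => (((hS z hz).1.differentiableAt (by norm_num)).hasFDerivAt.add_const 1).log
      (by linarith [hpos z hz])
  have := abs_sub_le_on_sphere hN hxp (f := fun y => Real.log (u y + 1)) (B := 2 * K / ‖x‖)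
    (fun z hz => (hd z (hne hz)).differentiableAt) (fun z hz => by
      have hu := hpos z (hne hz)
      rw [← norm_fderiv_eq_norm_gradient, (hd z (hne hz)).fderiv, norm_smul, norm_fderiv_eq_norm_gradient,
        norm_inv, Real.norm_eq_abs, abs_of_pos (by linarith), inv_mul_le_iff₀ (by linarith)]
      refine ((hKb u hS hpos z (hne hz)).1 1 one_pos).trans ?_
      have hz0 : 0 < ‖z‖ := norm_pos_iff.2 (hne hz)
      have : (u z + 1) / ‖z‖ ≤ (u z + 1) / (‖x‖ / 2) := by gcongr
      calc K * ((u z + 1) / ‖z‖) ≤ K * ((u z + 1) / (‖x‖ / 2)) := by gcongr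
        _ = _ := by field_simp) hxy.symm rfl
  rw [show 4 * (2 * K / ‖x‖) * ‖x‖ = 8 * K by field_simp; ring] at this
  have h1 : 0 < u x + 1 := by linarith [hpos x hx]
  have h2 : 0 < u y + 1 := by linarith [hpos y hy]
  have h3 := (abs_le.1 this).2
  rw [← Real.exp_log h2, ← Real.exp_log h1, ← Real.exp_add]
  apply Real.exp_le_exp.2
  linarith

end Punctured

section Removable
variable {N : ℕ}

lemma isCompact_annulus (r R : ℝ) : IsCompact {x : Eu N | r ≤ ‖x‖ ∧ ‖x‖ ≤ R} := by
  refine (isCompact_closedBall (0 : Eu N) R).of_isClosed_subset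
    ((isClosed_le continuous_const continuous_norm).inter (isClosed_le continuous_norm continuous_const))
    fun x hx => by simpa using hx.2

lemma annulus_mem_nhds {r R : ℝ} {x : Eu N} (h1 : r < ‖x‖) (h2 : ‖x‖ < R) :
    {x : Eu N | r ≤ ‖x‖ ∧ ‖x‖ ≤ R} ∈ 𝓝 x := by
  filter_upwards [continuous_norm.continuousAt.eventually (lt_mem_nhds h1),
    continuous_norm.continuousAt.eventually (gt_mem_nhds h2)] with y hy1 hy2 using ⟨hy1.le, hy2.le⟩

/-- Upper barrier on an annulus. -/
lemma le_fundamental_barrier {p q : ℝ} (hp : 1 < p) (hpN : p < N) {u : Eu N → ℝ}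
    (hS : ∀ x ≠ 0, SolvesAt p q u x) {r R B m : ℝ} (hr : 0 < r) (hB : 0 < B) (hm : 0 ≤ m)
    (hin : ∀ x, ‖x‖ = r → u x ≤ B) (hout : ∀ x, ‖x‖ = R → u x ≤ m) :
    ∀ x, r ≤ ‖x‖ → ‖x‖ ≤ R →
      u x ≤ B * r ^ ((N - p) / (p - 1)) * ‖x‖ ^ (-((N - p) / (p - 1))) + m := by
  set s := (N - p) / (p - 1) with hs
  have hs0 : 0 < s := div_pos (by linarith) (by linarith)
  have hne : ∀ x : Eu N, r ≤ ‖x‖ → x ≠ 0 := by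
    rintro x hx rfl
    rw [norm_zero] at hx; linarith
  set c := B * r ^ s with hc
  have hc0 : 0 < c := by positivity
  have key := le_of_strict_barrier hp (isCompact_annulus (N := N) r R) (v := u) (ψ := radialPower c (-s) m 0)
    (fun x hx => (hS x (hne x hx.1)).1.continuousAt.continuousWithinAt)
    (fun x hx => (contDiffAt_radialPower (n := 1) (hne x hx.1) _ _ _).continuousAt.continuousWithinAt) (by
      rintro x ⟨hx1, hx2⟩
      have hx0 := hne x hx1
      rcases eq_or_lt_of_le hx1 with h1 | h1
      · left
        rw [radialPower_apply, sub_zero, ← h1, hc, mul_assoc, ← Real.rpow_add hr, add_neg_cancel,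
          Real.rpow_zero]
        linarith [hin x h1.symm]
      rcases eq_or_lt_of_le hx2 with h2 | h2
      · left
        rw [radialPower_apply, sub_zero]
        have : 0 ≤ c * ‖x‖ ^ (-s) := by positivity
        linarith [hout x h2]
      · right
        have hgψ := gradient_radialPower_ne_zero hx0 (c := c) (s := -s) (by
          have : c * -s < 0 := by nlinarith
          exact this.ne) m
        refine ⟨annulus_mem_nhds h1 h2, contDiffAt_radialPower hx0 _ _ _, hgψ, (hS x hx0).regAt, fun hg => ?_⟩
        rw [(hS x hx0).2.2, pLaplace_radialPower hx0]
        have : (N : ℝ) - 1 + (-s - 1) * (p - 1) = 0 := by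
          have hp' : p - 1 ≠ 0 := by linarith
          rw [hs]; field_simp; ring
        rw [this, zero_mul, mul_zero]
        exact Real.rpow_pos_of_pos (norm_pos_iff.2 (hg ▸ hgψ)) _)
  intro x hx1 hx2
  have := key x ⟨hx1, hx2⟩
  rwa [radialPower_apply, sub_zero] at this

/-- Lower barrier on an annulus. -/
lemma ge_strict_barrier {p q : ℝ} (hp : 1 < p) {u : Eu N → ℝ}
    (hS : ∀ x ≠ 0, SolvesAt p q u x) (hpos : ∀ x ≠ 0, 0 ≤ u x) {s r R m : ℝ} (hs : 0 < s)
    (hs1 : (s + 1) * (q + 1 - p) ≤ 1)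
    (hr : 0 < r) (hm : 0 < m)
    (hout : ∀ x, ‖x‖ = R → m ≤ u x)
    (hsmall : (m * r ^ s * s) ^ (q + 1 - p) * R ^ (1 - (s + 1) * (q + 1 - p)) <
      (N - 1 : ℝ) - (s + 1) * (p - 1)) :
    ∀ x, r ≤ ‖x‖ → ‖x‖ ≤ R → m - m * r ^ s * ‖x‖ ^ (-s) ≤ u x := by
  have hne : ∀ x : Eu N, r ≤ ‖x‖ → x ≠ 0 := by
    rintro x hx rfl
    rw [norm_zero] at hx; linarith
  set c := m * r ^ s with hc
  have hc0 : 0 < c := by positivity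
  have key := le_of_strict_barrier hp (isCompact_annulus (N := N) r R) (v := fun y => - u y)
    (ψ := radialPower c (-s) (-m) 0)
    (fun x hx => (hS x (hne x hx.1)).1.continuousAt.neg.continuousWithinAt)
    (fun x hx => (contDiffAt_radialPower (n := 1) (hne x hx.1) _ _ _).continuousAt.continuousWithinAt) (by
      rintro x ⟨hx1, hx2⟩
      have hx0 := hne x hx1
      have hxp := norm_pos_iff.2 hx0
      rcases eq_or_lt_of_le hx1 with h1 | h1
      · left
        rw [radialPower_apply, sub_zero, ← h1, hc, mul_assoc, ← Real.rpow_add hr, add_neg_cancel,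
          Real.rpow_zero]
        linarith [hpos x hx0]
      rcases eq_or_lt_of_le hx2 with h2 | h2
      · left
        rw [radialPower_apply, sub_zero]
        have : 0 ≤ c * ‖x‖ ^ (-s) := by positivity
        linarith [hout x h2]
      · right
        have hcs : c * -s < 0 := by nlinarith
        have hgψ := gradient_radialPower_ne_zero hx0 (c := c) (s := -s) hcs.ne (-m)
        refine ⟨annulus_mem_nhds h1 h2, contDiffAt_radialPower hx0 _ _ _, hgψ, (hS x hx0).regAt.neg,
          fun hg => ?_⟩
        rw [gradient_neg'] at hg
        rw [pLaplace_neg, (hS x hx0).2.2, ← norm_neg (gradient u x), hg, norm_gradient_radialPower hx0,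
          pLaplace_radialPower hx0, sub_zero, abs_of_neg hcs, show -(c * -s) = c * s by ring,
          show c * -s = -(c * s) by ring]
        have hd : 0 < c * s := by positivity
        set d := c * s with hd'
        set X := ‖x‖ with hX
        have e1 : d ^ (p - 2) * -d = -(d ^ (p - 1)) := by
          rw [mul_neg, ← Real.rpow_add_one hd.ne']; congr 2; ring
        have e2 : (d * X ^ (-s - 1)) ^ q = d ^ (p - 1) * X ^ ((-s - 1) * (p - 1) - 1) *
            (d ^ (q + 1 - p) * X ^ (1 - (s + 1) * (q + 1 - p))) := by
          rw [Real.mul_rpow hd.le (by positivity), ← Real.rpow_mul hxp.le,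
            show d ^ q = d ^ (p - 1) * d ^ (q + 1 - p) by rw [← Real.rpow_add hd]; congr 1; ring,
            show X ^ ((-s - 1) * q) = X ^ ((-s - 1) * (p - 1) - 1) * X ^ (1 - (s + 1) * (q + 1 - p)) by
              rw [← Real.rpow_add hxp]; congr 1; ring]
          ring
        have e3 : d ^ (q + 1 - p) * X ^ (1 - (s + 1) * (q + 1 - p)) < (N - 1 : ℝ) - (s + 1) * (p - 1) := by
          refine lt_of_le_of_lt ?_ hsmall
          gcongr
        rw [e1, e2, neg_mul, neg_lt_neg_iff, show (N : ℝ) - 1 + (-s - 1) * (p - 1) =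
          (N - 1 : ℝ) - (s + 1) * (p - 1) by ring]
        have e4 : 0 < d ^ (p - 1) * X ^ ((-s - 1) * (p - 1) - 1) := by positivity
        have := mul_lt_mul_of_pos_left e3 e4
        linarith)
  intro x hx1 hx2
  have := key x ⟨hx1, hx2⟩
  rw [radialPower_apply, sub_zero] at this
  linarith

lemma tendsto_cocompact_eventually {f : Eu N → ℝ} {M : ℝ} (h : Tendsto f (cocompact (Eu N)) (𝓝 M))
    {P : ℝ → Prop} (hP : ∀ᶠ y in 𝓝 M, P y) : ∃ R₀, ∀ x : Eu N, R₀ ≤ ‖x‖ → P (f x) := by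
  have h1 := h.eventually hP
  rw [← Metric.cobounded_eq_cocompact, ← comap_norm_atTop, eventually_comap] at h1
  obtain ⟨R₀, hR₀⟩ := eventually_atTop.1 h1
  exact ⟨R₀, fun x hx => hR₀ _ hx x rfl⟩

/-- A nonnegative solution on the punctured space either blows up at the origin or is constant. -/
theorem tendsto_atTop_or_const {p q : ℝ} (hN : 2 ≤ N) (hp : 1 < p) (hpN : p < N) (hq : p - 1 < q)
    (hqp : q < p) {u : Eu N → ℝ} (hS : ∀ x ≠ 0, SolvesAt p q u x) (hpos : ∀ x ≠ 0, 0 ≤ u x)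
    {M : ℝ} (hM : Tendsto u (cocompact (Eu N)) (𝓝 M)) :
    Tendsto u (𝓝[≠] 0) atTop ∨ ∀ x ≠ 0, u x = M := by
  by_contra! hcon
  obtain ⟨h1, x, hx0, hxM⟩ := hcon
  have hxp : 0 < ‖x‖ := norm_pos_iff.2 hx0
  obtain ⟨C, hC, hCb⟩ := exists_harnack (N := N) hN hp hq hqp
  obtain ⟨B₀, hB₀⟩ : ∃ B₀, ∃ᶠ y in 𝓝[≠] (0 : Eu N), u y < B₀ := by
    by_contra! h
    refine h1 (tendsto_atTop.2 fun B => ?_)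
    simpa using h B
  set B := C * (|B₀| + 1) with hB
  have hBpos : 0 < B := by positivity
  have hsph : ∃ᶠ r in 𝓝[>] (0 : ℝ), ∀ y : Eu N, ‖y‖ = r → u y ≤ B := by
    rw [frequently_nhdsWithin_iff] at hB₀ ⊢
    have ht : Tendsto (fun y : Eu N => ‖y‖) (𝓝 0) (𝓝 0) := by
      simpa using (continuous_norm (E := Eu N)).tendsto 0
    refine ht.frequently (hB₀.mono ?_)
    rintro y ⟨hy, hy0⟩
    refine ⟨fun z hz => ?_, norm_pos_iff.2 hy0⟩
    have := hCb u hS hpos y z hy0 hz.symm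
    have h2 : C * (u y + 1) ≤ B := by
      rw [hB]; gcongr; linarith [le_abs_self B₀]
    linarith
  have : Nonempty (Fin N) := ⟨⟨0, by omega⟩⟩
  have hM0 : 0 ≤ M := ge_of_tendsto hM (by
    filter_upwards [(finite_singleton (0 : Eu N)).isCompact.compl_mem_cocompact] with y hy
    exact hpos y hy)
  have hτ0 : 0 < q + 1 - p := by linarith
  rcases lt_or_gt_of_ne hxM with hlt | hlt
  · set m := (u x + M) / 2 with hm
    have hum : u x < m := by rw [hm]; linarith
    have hm0 : 0 < m := by linarith [hpos x hx0]
    obtain ⟨R₀, hR₀⟩ := tendsto_cocompact_eventually hM (lt_mem_nhds (show m < M by rw [hm]; linarith))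
    set R := max R₀ ‖x‖ with hR
    have hR0 : 0 < R := hxp.trans_le (le_max_right _ _)
    obtain ⟨s, hs, hs1, hs2⟩ : ∃ s : ℝ, 0 < s ∧ 0 < (N - 1 : ℝ) - (s + 1) * (p - 1) ∧
        (s + 1) * (q + 1 - p) ≤ 1 := by
      have hp1 : 0 < p - 1 := by linarith
      refine ⟨min ((N - p) / (p - 1) / 2) ((p - q) / (q + 1 - p)), lt_min ?_ ?_, ?_, ?_⟩
      · have : 0 < (N : ℝ) - p := by linarith
        positivity
      · exact div_pos (by linarith) hτ0
      · have h2 := mul_le_mul_of_nonneg_right (min_le_left ((N - p) / (p - 1) / 2) ((p - q) / (q + 1 - p))) hp1.le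
        rw [show (N - p) / (p - 1) / 2 * (p - 1) = (N - p) / 2 by field_simp] at h2
        linarith
      · have h2 := mul_le_mul_of_nonneg_right (min_le_right ((N - p) / (p - 1) / 2) ((p - q) / (q + 1 - p))) hτ0.le
        rw [div_mul_cancel₀ _ hτ0.ne'] at h2
        linarith
    have hrs : Tendsto (fun r : ℝ => r ^ s) (𝓝[>] 0) (𝓝 0) := by
      have := (Real.continuousAt_rpow_const 0 s (Or.inr hs.le)).tendsto
      rw [Real.zero_rpow hs.ne'] at this
      exact this.mono_left nhdsWithin_le_nhds
    have ev1 : ∀ᶠ r in 𝓝[>] (0 : ℝ), (m * r ^ s * s) ^ (q + 1 - p) * R ^ (1 - (s + 1) * (q + 1 - p)) <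
        (N - 1 : ℝ) - (s + 1) * (p - 1) := by
      have h2 := (((hrs.const_mul m).mul_const s).rpow_const (p := q + 1 - p) (Or.inr hτ0.le)).mul_const
        (R ^ (1 - (s + 1) * (q + 1 - p)))
      rw [mul_zero, zero_mul, Real.zero_rpow hτ0.ne', zero_mul] at h2
      exact h2.eventually (gt_mem_nhds hs1)
    have ev2 : ∀ᶠ r in 𝓝[>] (0 : ℝ), u x < m - m * r ^ s * ‖x‖ ^ (-s) := by
      have h2 := ((hrs.const_mul m).mul_const (‖x‖ ^ (-s))).const_sub m
      rw [mul_zero, zero_mul, sub_zero] at h2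
      exact h2.eventually (lt_mem_nhds hum)
    have ev3 : ∀ᶠ r in 𝓝[>] (0 : ℝ), r < ‖x‖ := nhdsWithin_le_nhds (gt_mem_nhds hxp)
    obtain ⟨r, ⟨⟨hr1, hr2⟩, hr3⟩, hr0⟩ := (((ev1.and ev2).and ev3).and self_mem_nhdsWithin).exists
    have := ge_strict_barrier hp hS hpos hs hs2 hr0 hm0
      (fun y hy => (hR₀ y (hy ▸ le_max_left _ _)).le) hr1 x hr3.le (le_max_right _ _)
    linarith
  · set m := (u x + M) / 2 with hm
    have hum : m < u x := by rw [hm]; linarith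
    have hm0 : 0 ≤ m := by linarith
    obtain ⟨R₀, hR₀⟩ := tendsto_cocompact_eventually hM (gt_mem_nhds (show M < m by rw [hm]; linarith))
    set s := (N - p) / (p - 1) with hs
    have hs0 : 0 < s := div_pos (by linarith) (by linarith)
    have hrs : Tendsto (fun r : ℝ => r ^ s) (𝓝[>] 0) (𝓝 0) := by
      have := (Real.continuousAt_rpow_const 0 s (Or.inr hs0.le)).tendsto
      rw [Real.zero_rpow hs0.ne'] at this
      exact this.mono_left nhdsWithin_le_nhds
    have ev2 : ∀ᶠ r in 𝓝[>] (0 : ℝ), B * r ^ s * ‖x‖ ^ (-s) + m < u x := by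
      have h2 := ((hrs.const_mul B).mul_const (‖x‖ ^ (-s))).add_const m
      rw [mul_zero, zero_mul, zero_add] at h2
      exact h2.eventually (gt_mem_nhds hum)
    have ev3 : ∀ᶠ r in 𝓝[>] (0 : ℝ), r < ‖x‖ := nhdsWithin_le_nhds (gt_mem_nhds hxp)
    obtain ⟨r, hr1, ⟨hr2, hr3⟩, hr0⟩ :=
      (hsph.and_eventually ((ev2.and ev3).and self_mem_nhdsWithin)).exists
    have := le_fundamental_barrier hp hpN hS (R := max R₀ ‖x‖) hr0 hBpos hm0 hr1
      (fun y hy => (hR₀ y (hy ▸ le_max_left _ _)).le) x hr3.le (le_max_right _ _)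
    rw [← hs] at this
    linarith

end Removable

section Symmetry
variable {N : ℕ}

lemma SolvesAt.comp_isometry_add {p q : ℝ} {u : Eu N → ℝ} (L : Eu N ≃ₗᵢ[ℝ] Eu N) {a x : Eu N}
    (h : SolvesAt p q u (L x + a)) : SolvesAt p q (fun y => u (L y + a)) x := by
  have hL : ∀ {n : WithTop ℕ∞}, ContDiffAt ℝ n (fun y : Eu N => L y + a) x :=
    L.toContinuousLinearEquiv.contDiff.contDiffAt.add contDiffAt_const
  have hg : gradient (fun y => u (L y + a)) x = L.symm (gradient u (L x + a)) := by
    rw [gradient_comp_isometry L (fun y => u (y + a)), gradient_comp_add]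
  refine ⟨ContDiffAt.comp x h.1 hL, fun h0 => ContDiffAt.comp x (h.2.1 fun h1 => h0 ?_) hL, ?_⟩
  · rw [hg, h1, map_zero]
  · rw [hg, pLaplace_comp_isometry p L (fun y => u (y + a)), pLaplace_comp_add, L.symm.norm_map, h.2.2]

lemma RegAt.const_mul {u : Eu N → ℝ} {x : Eu N} (h : RegAt u x) {c : ℝ} :
    RegAt (fun y => c * u y) x := by
  refine ⟨contDiffAt_const.mul h.1, fun h0 => contDiffAt_const.mul (h.2 fun h1 => h0 ?_)⟩
  rw [gradient_const_mul, h1, smul_zero]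

/-- Moving plane inequality, for planes at a positive distance from the origin. -/
lemma le_reflection_of_neg {p q : ℝ} (hN : 2 ≤ N) (hp : 1 < p) (hq : p - 1 < q)
    {u : Eu N → ℝ} (hS : ∀ x ≠ 0, SolvesAt p q u x) (hpos : ∀ x ≠ 0, 0 ≤ u x)
    {M : ℝ} (hM : Tendsto u (cocompact (Eu N)) (𝓝 M)) (h0 : Tendsto u (𝓝[≠] 0) atTop)
    {e : Eu N} (he : e ≠ 0) {μ : ℝ} (hμ : μ < 0) {ε : ℝ} (hε : 0 < ε) {x : Eu N}
    (hx : inner ℝ x e < μ * ‖e‖ ^ 2 / 2) (hxe : x ≠ μ • e) :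
    u x ≤ (1 + ε) * u ((ℝ ∙ e)ᗮ.reflection x + μ • e) := by
  have : Nonempty (Fin N) := ⟨⟨0, by omega⟩⟩
  have hM0 : 0 ≤ M := ge_of_tendsto hM (by
    filter_upwards [(finite_singleton (0 : Eu N)).isCompact.compl_mem_cocompact] with y hy
    exact hpos y hy)
  have hep : 0 < ‖e‖ := norm_pos_iff.2 he
  set L := (ℝ ∙ e)ᗮ.reflection with hL
  set σ : Eu N → Eu N := fun y => L y + μ • e with hσ
  have hLapply : ∀ y, L y = y - (2 * (inner ℝ e y / ‖e‖ ^ 2)) • e := by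
    intro y
    rw [hL, Submodule.reflection_orthogonal_apply, Submodule.reflection_singleton_apply]
    simp only [RCLike.ofReal_real_eq_id, id]
    module
  have hσc : Continuous σ := L.continuous.add continuous_const
  have hσ0 : ∀ y, σ y = 0 → y = μ • e := by
    intro y hy
    have h1 : L y = -(μ • e) := eq_neg_of_add_eq_zero_left hy
    have h2 : L (L y) = y := Submodule.reflection_reflection _ y
    rw [← h2, h1, map_neg, map_smul, hLapply e, real_inner_self_eq_norm_sq, div_self (by positivity)]
    module
  have hσμ : σ (μ • e) = 0 := by
    simp only [hσ]
    rw [map_smul, hLapply e, real_inner_self_eq_norm_sq, div_self (by positivity)]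
    module
  have hσT : ∀ y, inner ℝ y e = μ * ‖e‖ ^ 2 / 2 → σ y = y := by
    intro y hy
    simp only [hσ]
    rw [hLapply, real_inner_comm, hy]
    rw [show 2 * (μ * ‖e‖ ^ 2 / 2 / ‖e‖ ^ 2) = μ by field_simp]
    module
  set w : Eu N → ℝ := fun y => (1 + ε) * u (σ y) with hw
  set Ω := {y : Eu N | inner ℝ y e < μ * ‖e‖ ^ 2 / 2} ∩ {μ • e}ᶜ with hΩ
  have hΩo : IsOpen Ω := (isOpen_lt (by fun_prop) continuous_const).inter isOpen_compl_singleton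
  have hne : ∀ y, inner ℝ y e ≤ μ * ‖e‖ ^ 2 / 2 → y ≠ 0 := by
    rintro y hy rfl
    rw [inner_zero_left] at hy
    have : 0 < -μ * ‖e‖ ^ 2 / 2 := by
      have := neg_pos.2 hμ
      positivity
    linarith
  have hΩ0 : ∀ y ∈ Ω, y ≠ 0 := fun y hy => hne y (le_of_lt hy.1)
  have hΩσ : ∀ y ∈ Ω, σ y ≠ 0 := fun y hy h => hy.2 (hσ0 y h)
  have hσS : ∀ y ∈ Ω, SolvesAt p q (fun y => u (σ y)) y := fun y hy =>
    (hS _ (hΩσ y hy)).comp_isometry_add L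
  have hcont : ∀ y, y ≠ 0 → σ y ≠ 0 → ContinuousAt (fun y => u y - w y) y := fun y hy hy' =>
    (hS y hy).1.continuousAt.sub (continuousAt_const.mul
      (ContinuousAt.comp (f := σ) (hS _ hy').1.continuousAt hσc.continuousAt))
  refine le_of_forall_pos_le_add fun c hc => ?_
  set K := {y | y ∈ Ω ∧ c ≤ u y - w y} with hK
  have hKcl : IsClosed K := by
    refine isClosed_of_closure_subset fun y hy => ?_
    have hyT : inner ℝ y e ≤ μ * ‖e‖ ^ 2 / 2 := by
      have : K ⊆ {y : Eu N | inner ℝ y e ≤ μ * ‖e‖ ^ 2 / 2} := fun z hz =>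
        le_of_lt (show inner ℝ z e < μ * ‖e‖ ^ 2 / 2 from hz.1.1)
      exact closure_minimal this (isClosed_le (by fun_prop) continuous_const) hy
    have hy0 := hne y hyT
    have hyμ : y ≠ μ • e := by
      rintro rfl
      have hlim : Tendsto σ (𝓝[≠] (μ • e)) (𝓝[≠] 0) := by
        refine tendsto_nhdsWithin_iff.2 ⟨?_, ?_⟩
        · have := hσc.tendsto (μ • e)
          rw [hσμ] at this
          exact this.mono_left nhdsWithin_le_nhds
        · filter_upwards [self_mem_nhdsWithin] with z hz h
          exact hz (hσ0 z h)
      have h1 := (h0.comp hlim).eventually (eventually_gt_atTop (u (μ • e) + 1))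
      have h2 : ∀ᶠ z in 𝓝 (μ • e), u z < u (μ • e) + 1 :=
        (hS _ hy0).1.continuousAt.eventually (gt_mem_nhds (by linarith))
      have h3 := (eventually_nhdsWithin_iff.1 h1).and h2
      obtain ⟨z, hzK, hz1, hz2⟩ := ((mem_closure_iff_frequently.1 hy).and_eventually h3).exists
      have hz3 := hz1 hzK.1.2
      simp only [Function.comp] at hz3
      have hz4 := hzK.2
      have hz5 : u (σ z) ≤ w z := by
        have := hpos _ (hΩσ z hzK.1)
        have : 0 ≤ ε * u (σ z) := by positivity
        simp only [hw]; linarith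
      linarith
    have hσy : σ y ≠ 0 := fun h => hyμ (hσ0 y h)
    have hcy : c ≤ u y - w y := by
      by_contra! h
      have := (hcont y hy0 hσy).eventually (gt_mem_nhds h)
      obtain ⟨z, hz1, hz2⟩ := ((mem_closure_iff_frequently.1 hy).and_eventually this).exists
      linarith [hz1.2]
    refine ⟨⟨lt_of_le_of_ne hyT fun h => ?_, hyμ⟩, hcy⟩
    have h1 := hσT y h
    simp only [hw] at hcy
    rw [h1] at hcy
    have : 0 ≤ ε * u y := mul_nonneg hε.le (hpos y hy0)
    linarith
  have hσco : Tendsto σ (cocompact (Eu N)) (cocompact (Eu N)) :=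
    (L.toHomeomorph.trans (Homeomorph.addRight (μ • e))).isClosedEmbedding.tendsto_cocompact
  have hKc : IsCompact K := by
    have h1 : Tendsto (fun y => u y - w y) (cocompact (Eu N)) (𝓝 (M - (1 + ε) * M)) :=
      hM.sub ((hM.comp hσco).const_mul (1 + ε))
    have h2 := h1.eventually (gt_mem_nhds (show M - (1 + ε) * M < c by nlinarith))
    obtain ⟨t, ht, hts⟩ := mem_cocompact.1 h2
    refine ht.of_isClosed_subset hKcl fun y hy => ?_
    by_contra h
    have h3 : u y - w y < c := hts h
    linarith [hy.2]
  have := comparison (c := c) hN hp hq hΩo hKc (fun y hy => hy.1) (u := u) (w := w)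
    (fun y hy => (hS y (hΩ0 y hy)).regAt) (fun y hy => (hσS y hy).regAt.const_mul)
    (fun y hy _ => (hS y (hΩ0 y hy)).2.2.ge) (fun y hy hgy => by
      have h1 : (0 : ℝ) < 1 + ε := by linarith
      rw [hw, gradient_const_mul] at hgy ⊢
      have h2 : gradient (fun y => u (σ y)) y ≠ 0 := fun h => hgy (by rw [h, smul_zero])
      rw [pLaplace_const_mul p h1, (hσS y hy).2.2, norm_smul, Real.norm_eq_abs, abs_of_pos h1,
        Real.mul_rpow h1.le (norm_nonneg _)]
      have h3 : 0 < ‖gradient (fun y => u (σ y)) y‖ := norm_pos_iff.2 h2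
      exact mul_lt_mul_of_pos_right (Real.rpow_lt_rpow_of_exponent_lt (by linarith) hq) (by positivity))
    (fun y hy hyK => by
      by_contra! h
      exact hyK ⟨hy, h.le⟩) x ⟨hx, hxe⟩
  linarith

/-- Solutions blowing up at the origin are radial. -/
theorem radial_of_tendsto_atTop {p q : ℝ} (hN : 2 ≤ N) (hp : 1 < p) (hq : p - 1 < q)
    {u : Eu N → ℝ} (hS : ∀ x ≠ 0, SolvesAt p q u x) (hpos : ∀ x ≠ 0, 0 ≤ u x)
    {M : ℝ} (hM : Tendsto u (cocompact (Eu N)) (𝓝 M)) (h0 : Tendsto u (𝓝[≠] 0) atTop)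
    {x y : Eu N} (hxy : ‖x‖ = ‖y‖) : u x = u y := by
  have key : ∀ x y : Eu N, x ≠ y → ‖x‖ = ‖y‖ → u x ≤ u y := by
    intro x y hne hxy
    set e := y - x with he
    have he0 : e ≠ 0 := sub_ne_zero.2 hne.symm
    have hyp : y ≠ 0 := by
      rintro rfl
      rw [norm_zero, norm_eq_zero] at hxy
      exact hne hxy
    have hρ : (ℝ ∙ e)ᗮ.reflection x = y := by
      rw [← Submodule.reflection_sub hxy.symm, Submodule.reflection_reflection]
    have hin : inner ℝ x e < 0 := by
      have h1 : ‖e‖ ^ 2 = ‖y‖ ^ 2 - 2 * inner ℝ y x + ‖x‖ ^ 2 := norm_sub_sq_real _ _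
      have h2 : 0 < ‖e‖ ^ 2 := by
        have := norm_pos_iff.2 he0
        positivity
      rw [he, inner_sub_right, real_inner_self_eq_norm_sq, real_inner_comm]
      rw [hxy] at *
      linarith
    have hlim : ∀ ε > 0, u x ≤ (1 + ε) * u y := by
      intro ε hε
      have hc1 : Tendsto (fun μ : ℝ => (ℝ ∙ e)ᗮ.reflection x + μ • e) (𝓝[<] 0) (𝓝 y) := by
        have := tendsto_line ((ℝ ∙ e)ᗮ.reflection x) e
        nth_rw 2 [hρ] at this
        exact this.mono_left nhdsWithin_le_nhds
      have hc2 := (((hS y hyp).1.continuousAt.tendsto.comp hc1).const_mul (1 + ε))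
      refine ge_of_tendsto hc2 ?_
      have ev1 : ∀ᶠ μ in 𝓝 (0 : ℝ), inner ℝ x e < μ * ‖e‖ ^ 2 / 2 :=
        (by fun_prop : Continuous fun μ : ℝ => μ * ‖e‖ ^ 2 / 2).continuousAt.eventually
          (lt_mem_nhds (by simpa using hin))
      have ev2 : ∀ᶠ μ in 𝓝 (0 : ℝ), x ≠ μ • e := by
        have hx0 : x ≠ 0 := norm_pos_iff.1 (hxy ▸ norm_pos_iff.2 hyp)
        filter_upwards [(by fun_prop : Continuous fun μ : ℝ => μ • e).continuousAt.eventually_ne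
          (show (fun μ : ℝ => μ • e) 0 ≠ x by simpa using hx0.symm)] with μ hμ using hμ.symm
      filter_upwards [nhdsWithin_le_nhds ev1, nhdsWithin_le_nhds ev2, self_mem_nhdsWithin] with μ h1 h2 h3
      exact le_reflection_of_neg hN hp hq hS hpos hM h0 he0 h3 hε h1 h2
    have hc : Tendsto (fun ε : ℝ => (1 + ε) * u y) (𝓝[>] 0) (𝓝 (u y)) := by
      have : Continuous fun ε : ℝ => (1 + ε) * u y := by fun_prop
      have := this.tendsto 0
      rw [add_zero, one_mul] at this
      exact this.mono_left nhdsWithin_le_nhds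
    exact ge_of_tendsto hc (by filter_upwards [self_mem_nhdsWithin] with ε hε using hlim ε hε)
  rcases eq_or_ne x y with h | h
  · rw [h]
  · exact le_antisymm (key x y h hxy) (key y x h.symm hxy.symm)

end Symmetry

section ODE

/-- A positive quantity whose `-σ` power is differentiated along `Z' = ±r^(κ-1) Z^(1+σ)`. -/
lemma hasDerivAt_rpow_neg_add {Z : ℝ → ℝ} {σ κ s r : ℝ} (hκ : 0 < κ) (hr : 0 < r)
    (hZ : 0 < Z r) (h : HasDerivAt Z (s * (r ^ (κ - 1) * (Z r) ^ (1 + σ))) r) :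
    HasDerivAt (fun t => (Z t) ^ (-σ) + s * (σ / κ * t ^ κ)) 0 r := by
  have h1 := (h.rpow_const (p := -σ) (Or.inl hZ.ne')).add
    (((Real.hasDerivAt_rpow_const (p := κ) (Or.inl hr.ne')).const_mul (σ / κ)).const_mul s)
  refine h1.congr_deriv ?_
  have h2 : (Z r) ^ (1 + σ) * (Z r) ^ (-σ - 1) = 1 := by
    rw [← Real.rpow_add hZ, show 1 + σ + (-σ - 1) = 0 by ring, Real.rpow_zero]
  calc _ = -(s * σ * r ^ (κ - 1)) * ((Z r) ^ (1 + σ) * (Z r) ^ (-σ - 1)) + s * (σ / κ * κ) * r ^ (κ - 1) := by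
        ring
    _ = 0 := by rw [h2, div_mul_cancel₀ _ hκ.ne']; ring

lemma eq_of_hasDerivAt_zero {g : ℝ → ℝ} {a b : ℝ} (hab : a ≤ b) (h : ∀ t ∈ Icc a b, HasDerivAt g 0 t) :
    g a = g b :=
  (constant_of_derivWithin_zero (fun t ht => (h t ht).differentiableAt.differentiableWithinAt)
    (fun t ht => (h t (Ico_subset_Icc_self ht)).hasDerivWithinAt.derivWithin
      (uniqueDiffOn_Icc (ht.1.trans_lt ht.2) t (Ico_subset_Icc_self ht))) b (right_mem_Icc.2 hab)).symm

/-- Global solutions of `Y' = r^(κ-1) |Y|^(1+σ)` on the half line. -/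
theorem ode_classification {Y : ℝ → ℝ} {σ κ : ℝ} (hσ : 0 < σ) (hκ : 0 < κ)
    (hY : ∀ r > 0, HasDerivAt Y (r ^ (κ - 1) * |Y r| ^ (1 + σ)) r) :
    (∀ r > 0, Y r = 0) ∨
      ∃ C ≥ 0, ∀ r > 0, Y r < 0 ∧ (-Y r) ^ (-σ) = C + σ / κ * r ^ κ := by
  have hmono : ∀ a b : ℝ, 0 < a → a ≤ b → Y a ≤ Y b := by
    intro a b ha hab
    have hpos : ∀ t ∈ Icc a b, 0 < t := fun t ht => ha.trans_le ht.1
    refine monotoneOn_of_hasDerivWithinAt_nonneg (convex_Icc a b)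
      (fun t ht => (hY t (hpos t ht)).continuousAt.continuousWithinAt)
      (fun t ht => (hY t (hpos t (interior_subset ht))).hasDerivWithinAt) (fun t ht => ?_)
      (left_mem_Icc.2 hab) (right_mem_Icc.2 hab) hab
    have := hpos t (interior_subset ht)
    positivity
  have hnonpos : ∀ r > 0, Y r ≤ 0 := by
    intro r hr
    by_contra! h
    have hconst : ∀ b ≥ r, (Y b) ^ (-σ) + 1 * (σ / κ * b ^ κ) = (Y r) ^ (-σ) + 1 * (σ / κ * r ^ κ) := by
      intro b hb
      refine (eq_of_hasDerivAt_zero (g := fun t => (Y t) ^ (-σ) + 1 * (σ / κ * t ^ κ)) hb fun t ht => ?_).symm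
      have ht0 : 0 < t := hr.trans_le ht.1
      have hYt : 0 < Y t := h.trans_le (hmono r t hr ht.1)
      refine hasDerivAt_rpow_neg_add hκ ht0 hYt ?_
      have := hY t ht0
      rwa [abs_of_pos hYt, ← one_mul (t ^ (κ - 1) * _)] at this
    have hlim : Tendsto (fun b : ℝ => σ / κ * b ^ κ) atTop atTop :=
      (tendsto_rpow_atTop hκ).const_mul_atTop (by positivity)
    obtain ⟨b, hb1, hb2⟩ := ((hlim.eventually (eventually_gt_atTop
      ((Y r) ^ (-σ) + 1 * (σ / κ * r ^ κ)))).and (eventually_ge_atTop r)).exists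
    have h1 := hconst b hb2
    have h2 : 0 < (Y b) ^ (-σ) := Real.rpow_pos_of_pos (h.trans_le (hmono r b hr hb2)) _
    linarith
  by_cases h0 : ∀ r > 0, Y r = 0
  · exact Or.inl h0
  right
  push Not at h0
  obtain ⟨r₁, hr₁, hYr₁⟩ := h0
  have hY1 : Y r₁ < 0 := lt_of_le_of_ne (hnonpos r₁ hr₁) hYr₁
  have hneg : ∀ r > 0, Y r < 0 := by
    intro r hr
    rcases le_total r r₁ with h | h
    · exact (hmono r r₁ hr h).trans_lt hY1
    have hpos : ∀ t ∈ Icc r₁ r, 0 < t := fun t ht => hr₁.trans_le ht.1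
    have hcY : ContinuousOn Y (Icc r₁ r) := fun t ht =>
      (hY t (hpos t ht)).continuousAt.continuousWithinAt
    have hc : ContinuousOn (fun t => t ^ (κ - 1) * |Y t| ^ σ) (Icc r₁ r) := by
      refine ContinuousOn.mul (continuousOn_id.rpow_const fun t ht => Or.inl (hpos t ht).ne') ?_
      exact hcY.abs.rpow_const fun t _ => Or.inr hσ.le
    obtain ⟨L, hL⟩ := isCompact_Icc.bddAbove_image hc
    have hLt : ∀ t ∈ Icc r₁ r, t ^ (κ - 1) * |Y t| ^ σ ≤ L := fun t ht => hL (mem_image_of_mem _ ht)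
    have hd : ∀ t ∈ Icc r₁ r, HasDerivAt (fun t => -Y t * Real.exp (L * t))
        (-(t ^ (κ - 1) * |Y t| ^ (1 + σ)) * Real.exp (L * t) + -Y t * (Real.exp (L * t) * L)) t := by
      intro t ht
      have h1 : HasDerivAt (fun t => Real.exp (L * t)) (Real.exp (L * t) * L) t := by
        simpa using ((hasDerivAt_id t).const_mul L).exp
      exact (hY t (hpos t ht)).fun_neg.fun_mul h1
    have hm : -Y r₁ * Real.exp (L * r₁) ≤ -Y r * Real.exp (L * r) := by
      refine monotoneOn_of_hasDerivWithinAt_nonneg (convex_Icc r₁ r)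
        (fun t ht => (hd t ht).continuousAt.continuousWithinAt)
        (fun t ht => (hd t (interior_subset ht)).hasDerivWithinAt) (fun t ht => ?_)
        (left_mem_Icc.2 h) (right_mem_Icc.2 h) h
      have ht' := interior_subset ht
      have hYt := hnonpos t (hpos t ht')
      rcases eq_or_lt_of_le hYt with h2 | h2
      · rw [h2, abs_zero, Real.zero_rpow (by linarith)]; simp
      · have h3 := hLt t ht'
        rw [Real.rpow_add (abs_pos.2 h2.ne), Real.rpow_one, abs_of_neg h2] at *
        have h4 : 0 ≤ Real.exp (L * t) * (-Y t) * (L - t ^ (κ - 1) * (-Y t) ^ σ) :=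
          mul_nonneg (mul_nonneg (Real.exp_pos _).le (by linarith)) (by linarith)
        linarith
    have h5 : 0 < -Y r * Real.exp (L * r) :=
      lt_of_lt_of_le (mul_pos (by linarith) (Real.exp_pos _)) hm
    have := pos_of_mul_pos_left h5 (Real.exp_pos _).le
    linarith
  have hD : ∀ t > 0, HasDerivAt (fun t => (-Y t) ^ (-σ) + -1 * (σ / κ * t ^ κ)) 0 t := by
    intro t ht
    have hYt := hneg t ht
    refine hasDerivAt_rpow_neg_add (Z := fun t => -Y t) hκ ht (by simpa using hYt) ?_
    have := (hY t ht).fun_neg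
    rw [abs_of_neg hYt] at this
    exact this.congr_deriv (by ring)
  set C := (-Y 1) ^ (-σ) + -1 * (σ / κ * 1 ^ κ) with hC
  have hconst : ∀ r > 0, (-Y r) ^ (-σ) = C + σ / κ * r ^ κ := by
    intro r hr
    have : (-Y r) ^ (-σ) + -1 * (σ / κ * r ^ κ) = C := by
      rcases le_total r 1 with h | h
      · exact eq_of_hasDerivAt_zero (g := fun t => (-Y t) ^ (-σ) + -1 * (σ / κ * t ^ κ)) h
          fun t ht => hD t (hr.trans_le ht.1)
      · exact (eq_of_hasDerivAt_zero (g := fun t => (-Y t) ^ (-σ) + -1 * (σ / κ * t ^ κ)) h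
          fun t ht => hD t (one_pos.trans_le ht.1)).symm
    linarith
  refine ⟨C, ?_, fun r hr => ⟨hneg r hr, hconst r hr⟩⟩
  have hlim : Tendsto (fun r : ℝ => C + σ / κ * r ^ κ) (𝓝[>] 0) (𝓝 (C + σ / κ * 0)) := by
    have := (Real.continuousAt_rpow_const 0 κ (Or.inr hκ.le)).tendsto
    rw [Real.zero_rpow hκ.ne'] at this
    exact ((this.mono_left nhdsWithin_le_nhds).const_mul _).const_add _
  rw [mul_zero, add_zero] at hlim
  refine ge_of_tendsto hlim ?_
  filter_upwards [self_mem_nhdsWithin] with r hr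
  rw [← hconst r hr]
  have := hneg r hr
  exact Real.rpow_nonneg (by linarith) _

end ODE

section Radial
variable {N : ℕ}

lemma hasFDerivAt_norm_of_ne_zero {x : Eu N} (hx : x ≠ 0) :
    HasFDerivAt (fun y : Eu N => ‖y‖) (‖x‖⁻¹ • innerSL ℝ x) x := by
  have hxp : 0 < ‖x‖ := norm_pos_iff.2 hx
  have h1 := ((hasFDerivAt_id x).norm_sq).sqrt (by simpa using hx)
  simp only [id, Real.sqrt_sq (norm_nonneg _)] at h1
  refine h1.congr_fderiv ?_
  ext v
  simp
  field_simp

/-- The radial form of the equation. -/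
lemma radial_ode {p q : ℝ} {u : Eu N → ℝ} (hS : ∀ x ≠ 0, SolvesAt p q u x)
    (hV : ∀ x ≠ 0, DifferentiableAt ℝ (pGradField p u) x)
    (hrad : ∀ x y : Eu N, ‖x‖ = ‖y‖ → u x = u y) {e : Eu N} (he : ‖e‖ = 1) :
    ∃ D : ℝ → ℝ, ∀ r > 0, HasDerivAt (fun r : ℝ => u (r • e)) (D r) r ∧
      HasDerivAt (fun r => |D r| ^ (p - 2) * D r)
        (|D r| ^ q - (N - 1) / r * (|D r| ^ (p - 2) * D r)) r := by
  have hne : ∀ r > (0 : ℝ), r • e ≠ 0 := fun r hr =>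
    smul_ne_zero hr.ne' (norm_pos_iff.1 (he ▸ one_pos))
  have hnorm : ∀ r ≥ (0 : ℝ), ‖r • e‖ = r := fun r hr => by
    rw [norm_smul, he, mul_one, Real.norm_eq_abs, abs_of_nonneg hr]
  have hline : ∀ r : ℝ, HasDerivAt (fun r : ℝ => r • e) e r := fun r => by
    simpa using (hasDerivAt_id r).smul_const e
  set D : ℝ → ℝ := fun r => inner ℝ (gradient u (r • e)) e with hD
  have hf : ∀ r > 0, HasDerivAt (fun r : ℝ => u (r • e)) (D r) r := fun r hr => by
    simp only [hD]
    rw [inner_gradient_left]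
    exact HasFDerivAt.comp_hasDerivAt (l := u) r
      (((hS _ (hne r hr)).1.differentiableAt (by norm_num)).hasFDerivAt) (hline r)
  have hgrad : ∀ x ≠ 0, gradient u x = (D ‖x‖ / ‖x‖) • x := by
    intro x hx
    have h1 : u = fun y => u (‖y‖ • e) := by
      ext y
      exact hrad _ _ (hnorm _ (norm_nonneg y)).symm
    have h2 : HasFDerivAt u (D ‖x‖ • (‖x‖⁻¹ • innerSL ℝ x)) x := by
      have := (hf ‖x‖ (norm_pos_iff.2 hx)).comp_hasFDerivAt x (hasFDerivAt_norm_of_ne_zero hx)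
      rw [h1]
      exact this
    apply ext_inner_right ℝ
    intro v
    rw [inner_gradient_left, h2.fderiv, inner_smul_left]
    simp
    ring
  have hgn : ∀ x ≠ 0, ‖gradient u x‖ = |D ‖x‖| := by
    intro x hx
    have hxp : 0 < ‖x‖ := norm_pos_iff.2 hx
    rw [hgrad x hx, norm_smul, Real.norm_eq_abs, abs_div, abs_norm, div_mul_cancel₀ _ hxp.ne']
  set W : ℝ → ℝ := fun r => |D r| ^ (p - 2) * D r with hW
  have hVW : ∀ x ≠ 0, pGradField p u x = (W ‖x‖ / ‖x‖) • x := by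
    intro x hx
    rw [pGradField, hgn x hx, hgrad x hx, smul_smul, hW, mul_div_assoc]
  refine ⟨D, fun r hr => ⟨hf r hr, ?_⟩⟩
  have hWd : DifferentiableAt ℝ W r := by
    have h1 : DifferentiableAt ℝ (fun r : ℝ => inner ℝ (pGradField p u (r • e)) e) r :=
      (DifferentiableAt.comp r (g := pGradField p u) (hV _ (hne r hr))
        (hline r).differentiableAt).inner ℝ (differentiableAt_const e)
    refine h1.congr_of_eventuallyEq ?_
    filter_upwards [lt_mem_nhds hr] with t ht
    rw [hVW _ (hne t ht), hnorm t ht.le, smul_smul, div_mul_cancel₀ _ ht.ne', inner_smul_left,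
      real_inner_self_eq_norm_sq, he]
    simp
  have hWr := hWd.hasDerivAt
  have hx := hne r hr
  have hg := hWr.fun_div (hasDerivAt_id' r) hr.ne'
  have hg2 : HasDerivAt (fun t => W t / t) ((deriv W r * r - W r) / r ^ 2) ‖r • e‖ := by
    rw [hnorm r hr.le]
    simpa using hg
  have h2 := (hg2.comp_hasFDerivAt (r • e) (hasFDerivAt_norm_of_ne_zero hx)).fun_smul
    (hasFDerivAt_id (r • e))
  have h3 : pGradField p u =ᶠ[𝓝 (r • e)] fun y => ((fun t => W t / t) ∘ fun y => ‖y‖) y • id y := by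
    filter_upwards [isOpen_ne.mem_nhds hx] with y hy using hVW y hy
  have h4 := (hS _ hx).2.2
  rw [pLaplace, h3.fderiv_eq, h2.fderiv, tr_add, tr_smul, tr_id, tr_smulRight, hgn _ hx] at h4
  simp only [smul_apply, innerSL_apply_apply, id, real_inner_self_eq_norm_sq, hnorm r hr.le, Function.comp,
    smul_eq_mul] at h4
  refine hWr.congr_deriv ?_
  change deriv W r = |D r| ^ q - (N - 1) / r * W r
  rw [← h4]
  field_simp
  ring

/-- Classification of the profiles. -/
lemma profile_classification {n p q M : ℝ} (hp : 1 < p) (hq : p - 1 < q) (hqp : q < p)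
    (hqc : 0 < n * (p - 1) - (n - 1) * q) {f D : ℝ → ℝ}
    (hf : ∀ r > 0, HasDerivAt f (D r) r)
    (hD : ∀ r > 0, HasDerivAt (fun r => |D r| ^ (p - 2) * D r)
        (|D r| ^ q - (n - 1) / r * (|D r| ^ (p - 2) * D r)) r)
    (hM : Tendsto f atTop (𝓝 M)) :
    (∀ r > 0, f r = M) ∨
    (∃ k > (0 : ℝ), ∀ r > 0, f r = (∫ s in Set.Ioi r,
            s ^ ((1 - n) / (p - 1)) *
              (((n * (p - 1) - (n - 1) * q) / (q + 1 - p))⁻¹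
                  * s ^ ((q + 1 - p) * ((n * (p - 1) - (n - 1) * q) / (q + 1 - p)) / (p - 1))
                + k ^ (p - 1 - q)) ^ (-(1 / (q + 1 - p)))) + M) ∨
    (∀ r > 0, f r = ((p - q) / (q + 1 - p))⁻¹
            * ((n * (p - 1) - (n - 1) * q) / (q + 1 - p)) ^ (1 / (q + 1 - p))
            * r ^ (-((p - q) / (q + 1 - p))) + M) := by
  have hτ : 0 < q + 1 - p := by linarith
  have hp1 : 0 < p - 1 := by linarith
  have hpq : 0 < p - q := by linarith
  set b := (n * (p - 1) - (n - 1) * q) / (q + 1 - p) with hb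
  have hb0 : 0 < b := div_pos hqc hτ
  set σ := (q + 1 - p) / (p - 1) with hσ
  have hσ0 : 0 < σ := div_pos hτ hp1
  set κ := (q + 1 - p) * b / (p - 1) with hκ
  have hκ0 : 0 < κ := by positivity
  have hκ1 : κ - 1 = (n - 1) - (n - 1) * (1 + σ) := by
    rw [hκ, hb, hσ]; field_simp; ring
  have hσκ : σ / κ = b⁻¹ := by rw [hσ, hκ]; field_simp
  have hWabs : ∀ r, |(|D r| ^ (p - 2) * D r)| = |D r| ^ (p - 1) := by
    intro r
    rw [abs_mul, abs_of_nonneg (by positivity : 0 ≤ |D r| ^ (p - 2))]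
    rcases eq_or_ne (D r) 0 with h | h
    · rw [h, abs_zero, Real.zero_rpow hp1.ne', mul_zero]
    · rw [← Real.rpow_add_one (abs_pos.2 h).ne']; congr 1; ring
  set Y : ℝ → ℝ := fun r => r ^ (n - 1) * (|D r| ^ (p - 2) * D r) with hY
  have hYabs : ∀ r > 0, |Y r| = r ^ (n - 1) * |D r| ^ (p - 1) := fun r hr => by
    rw [hY]
    simp only
    rw [abs_mul, hWabs, abs_of_nonneg (by positivity)]
  have hYd : ∀ r > 0, HasDerivAt Y (r ^ (κ - 1) * |Y r| ^ (1 + σ)) r := by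
    intro r hr
    have h1 := (Real.hasDerivAt_rpow_const (p := n - 1) (Or.inl hr.ne')).fun_mul (hD r hr)
    refine h1.congr_deriv ?_
    have h2 : r ^ (κ - 1) * r ^ ((n - 1) * (1 + σ)) = r ^ (n - 1) := by
      rw [← Real.rpow_add hr, hκ1, sub_add_cancel]
    rw [hYabs r hr, Real.mul_rpow (by positivity) (by positivity), ← Real.rpow_mul hr.le,
      ← Real.rpow_mul (abs_nonneg _), show (p - 1) * (1 + σ) = q by rw [hσ]; field_simp; ring,
      ← mul_assoc (r ^ (κ - 1)), h2, Real.rpow_sub_one hr.ne']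
    field_simp
    ring
  rcases ode_classification hσ0 hκ0 hYd with h | ⟨C, hC, h⟩
  · left
    have hD0 : ∀ r > 0, D r = 0 := by
      intro r hr
      have h1 := hYabs r hr
      rw [h r hr, abs_zero, eq_comm, mul_eq_zero] at h1
      rcases h1 with h1 | h1
      · exact absurd h1 (by positivity)
      · exact abs_eq_zero.1 ((Real.rpow_eq_zero (abs_nonneg _) hp1.ne').1 h1)
    intro r hr
    refine tendsto_nhds_unique (tendsto_const_nhds.congr' ?_) hM
    filter_upwards [eventually_ge_atTop r] with t ht
    refine eq_of_hasDerivAt_zero ht fun s hs => ?_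
    have hs0 : 0 < s := hr.trans_le hs.1
    exact hD0 s hs0 ▸ hf s hs0
  have hDeq : ∀ r > 0, D r = -(r ^ ((1 - n) / (p - 1)) * (C + b⁻¹ * r ^ κ) ^ (-(1 / (q + 1 - p)))) := by
    intro r hr
    obtain ⟨h1, h2⟩ := h r hr
    have hDneg : D r < 0 := by
      by_contra! h3
      have : 0 ≤ Y r := by positivity
      linarith
    have h3 : -Y r = r ^ (n - 1) * (-D r) ^ (p - 1) := by
      rw [← abs_of_neg h1, hYabs r hr, abs_of_neg hDneg]
    have h4 : 0 < -Y r := by linarith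
    have h5 : 0 < -D r := by linarith
    rw [← hσκ, ← h2, ← Real.rpow_mul h4.le, show -σ * -(1 / (q + 1 - p)) = 1 / (p - 1) by
      rw [hσ]; field_simp, h3, Real.mul_rpow (by positivity) (by positivity), ← Real.rpow_mul hr.le,
      ← Real.rpow_mul h5.le, mul_one_div, mul_one_div, div_self hp1.ne', Real.rpow_one, ← mul_assoc,
      ← Real.rpow_add hr, show (1 - n) / (p - 1) + (n - 1) / (p - 1) = 0 by ring, Real.rpow_zero]
    ring
  right
  rcases eq_or_lt_of_le hC with hC0 | hC0
  · right
    intro r hr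
    set β := (p - q) / (q + 1 - p) with hβ
    have hβ0 : 0 < β := div_pos hpq hτ
    set B := b ^ (1 / (q + 1 - p)) with hB
    have hDeq' : ∀ t > 0, D t = -(B * t ^ (-β - 1)) := by
      intro t ht
      rw [hDeq t ht, ← hC0, zero_add, Real.mul_rpow (by positivity) (by positivity),
        Real.inv_rpow hb0.le, Real.rpow_neg hb0.le, inv_inv, ← Real.rpow_mul ht.le,
        mul_left_comm, ← Real.rpow_add ht]
      congr 3
      rw [hκ, hβ, hb]
      field_simp
      ring
    have hd : ∀ t > 0, HasDerivAt (fun t => f t - β⁻¹ * B * t ^ (-β)) 0 t := by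
      intro t ht
      have h1 := (hf t ht).fun_sub ((Real.hasDerivAt_rpow_const (p := -β) (Or.inl ht.ne')).const_mul (β⁻¹ * B))
      refine h1.congr_deriv ?_
      rw [hDeq' t ht]
      field_simp
      ring
    have hlim : Tendsto (fun t => f t - β⁻¹ * B * t ^ (-β)) atTop (𝓝 M) := by
      simpa using hM.sub ((tendsto_rpow_neg_atTop hβ0).const_mul (β⁻¹ * B))
    have : f r - β⁻¹ * B * r ^ (-β) = M := by
      refine tendsto_nhds_unique (tendsto_const_nhds.congr' ?_) hlim
      filter_upwards [eventually_ge_atTop r] with t ht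
      exact eq_of_hasDerivAt_zero (g := fun t => f t - β⁻¹ * B * t ^ (-β)) ht
        fun s hs => hd s (hr.trans_le hs.1)
    linarith
  · left
    refine ⟨C ^ (-(1 / (q + 1 - p))), by positivity, fun r hr => ?_⟩
    have hk : (C ^ (-(1 / (q + 1 - p)))) ^ (p - 1 - q) = C := by
      rw [← Real.rpow_mul hC0.le, show -(1 / (q + 1 - p)) * (p - 1 - q) = 1 by field_simp; ring, Real.rpow_one]
    rw [hk]
    have h1 := integral_Ioi_of_hasDerivAt_of_nonpos' (a := r) (g := f) (g' := D) (l := M)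
      (fun t ht => hf t (hr.trans_le ht)) (fun t ht => by
        have ht0 : 0 < t := hr.trans ht
        rw [hDeq t ht0, neg_nonpos]
        positivity) hM
    have h2 : ∫ t in Ioi r, D t = ∫ t in Ioi r,
        -(t ^ ((1 - n) / (p - 1)) * (b⁻¹ * t ^ κ + C) ^ (-(1 / (q + 1 - p)))) :=
      setIntegral_congr_fun measurableSet_Ioi fun t ht => by
        rw [hDeq t (hr.trans ht), add_comm C]
    rw [h2, integral_neg] at h1
    linarith

end Radial

lemma IsStrongSolution.solvesAt {N : ℕ} {p q : ℝ} {G : Set (Eu N)} (hG : IsOpen G) {u : Eu N → ℝ}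
    (hu : IsStrongSolution p q G u) {x : Eu N} (hx : x ∈ G) : SolvesAt p q u x := by
  have h1 : ContDiffAt ℝ 1 u x := hu.1.contDiffAt (hG.mem_nhds hx)
  refine ⟨h1, fun h0 => hu.2.1.contDiffAt ?_, (hu.2.2 x hx).2⟩
  filter_upwards [hG.mem_nhds hx, SolvesAt.gradient_ne_eventually h1 h0] with y hy hy0
  exact ⟨hy, hy0⟩

/-- Classification of nonnegative solutions of (E) on `ℝ^N ∖ {0}`: such solutions are
radial and given by one of three explicit families. -/
theorem global_classification (N : ℕ) (hN : 2 ≤ N) (p q : ℝ) (hp1 : 1 < p) (hpN : p < N)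
    (hq1 : p - 1 < q) (hq2 : q < (N : ℝ) * (p - 1) / ((N : ℝ) - 1))
    (u : EuclideanSpace ℝ (Fin N) → ℝ)
    (hu : IsStrongSolution p q ({(0 : EuclideanSpace ℝ (Fin N))}ᶜ) u)
    (hpos : ∀ x : EuclideanSpace ℝ (Fin N), x ≠ 0 → 0 ≤ u x) :
    (∀ x y : EuclideanSpace ℝ (Fin N), ‖x‖ = ‖y‖ → u x = u y) ∧
    ((∃ M : ℝ, 0 ≤ M ∧ ∀ x : EuclideanSpace ℝ (Fin N), x ≠ 0 → u x = M) ∨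
     (∃ k > (0 : ℝ), ∃ M ≥ (0 : ℝ), ∀ x : EuclideanSpace ℝ (Fin N), x ≠ 0 →
        u x = (∫ s in Set.Ioi ‖x‖,
            s ^ ((1 - (N : ℝ)) / (p - 1)) *
              ((((N : ℝ) * (p - 1) - ((N : ℝ) - 1) * q) / (q + 1 - p))⁻¹
                  * s ^ ((q + 1 - p) * (((N : ℝ) * (p - 1) - ((N : ℝ) - 1) * q) / (q + 1 - p))
                      / (p - 1))
                + k ^ (p - 1 - q)) ^ (-(1 / (q + 1 - p)))) + M) ∨
     (∃ M ≥ (0 : ℝ), ∀ x : EuclideanSpace ℝ (Fin N), x ≠ 0 →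
        u x = ((p - q) / (q + 1 - p))⁻¹
            * (((N : ℝ) * (p - 1) - ((N : ℝ) - 1) * q) / (q + 1 - p)) ^ (1 / (q + 1 - p))
            * ‖x‖ ^ (-((p - q) / (q + 1 - p))) + M)) := by
  have hN1 : (0 : ℝ) < (N : ℝ) - 1 := by
    have : (2 : ℝ) ≤ N := by exact_mod_cast hN
    linarith
  have hq3 := (lt_div_iff₀ hN1).1 hq2
  have hqc : 0 < (N : ℝ) * (p - 1) - ((N : ℝ) - 1) * q := by linarith
  have hqp : q < p := by
    by_contra! h
    nlinarith [mul_le_mul_of_nonneg_right h hN1.le]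
  have hτ : 0 < q + 1 - p := by linarith
  have hS : ∀ x ≠ 0, SolvesAt p q u x := fun x hx => hu.solvesAt isOpen_compl_singleton hx
  obtain ⟨K, hK, hKb⟩ := exists_gradient_bounds_punctured (N := N) hN hp1 hq1 hqp
  obtain ⟨M, hM⟩ := exists_tendsto_cocompact hN (f := u) (div_pos (sub_pos.2 hqp) hτ) hK.le
    (fun z hz => (hS z hz).1.differentiableAt (by norm_num)) fun z hz => by
      rw [show -((p - q) / (q + 1 - p)) - 1 = -(1 / (q + 1 - p)) by field_simp; ring]
      exact (hKb u hS hpos z hz).2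
  obtain ⟨e, he, -⟩ := exists_orthogonal_of_norm hN 0 zero_le_one
  have hnorm : ∀ r ≥ (0 : ℝ), ‖r • e‖ = r := fun r hr => by
    rw [norm_smul, he, mul_one, Real.norm_eq_abs, abs_of_nonneg hr]
  have hfM : Tendsto (fun r : ℝ => u (r • e)) atTop (𝓝 M) := by
    refine hM.comp ?_
    rw [← Metric.cobounded_eq_cocompact, ← comap_norm_atTop, tendsto_comap_iff]
    exact tendsto_id.congr' ((eventually_ge_atTop 0).mono fun r hr => (hnorm r hr).symm)
  have hM0 : 0 ≤ M := ge_of_tendsto hfM <| (eventually_gt_atTop 0).mono fun r hr =>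
    hpos _ (smul_ne_zero hr.ne' (norm_pos_iff.1 (he ▸ one_pos)))
  rcases tendsto_atTop_or_const hN hp1 hpN hq1 hqp hS hpos hM with h0 | hc
  · have hrad : ∀ x y : EuclideanSpace ℝ (Fin N), ‖x‖ = ‖y‖ → u x = u y := fun x y hxy =>
      radial_of_tendsto_atTop hN hp1 hq1 hS hpos hM h0 hxy
    have hprof : ∀ x : EuclideanSpace ℝ (Fin N), u x = u (‖x‖ • e) := fun x =>
      hrad _ _ (hnorm _ (norm_nonneg x)).symm
    obtain ⟨D, hD⟩ := radial_ode hS (fun x hx => (hu.2.2 x hx).1) hrad he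
    refine ⟨hrad, ?_⟩
    rcases profile_classification hp1 hq1 hqp hqc (fun r hr => (hD r hr).1)
      (fun r hr => (hD r hr).2) hfM with h | ⟨k, hk, h⟩ | h
    · exact Or.inl ⟨M, hM0, fun x hx => (hprof x).trans (h _ (norm_pos_iff.2 hx))⟩
    · exact Or.inr (Or.inl ⟨k, hk, M, hM0, fun x hx => (hprof x).trans (h _ (norm_pos_iff.2 hx))⟩)
    · exact Or.inr (Or.inr ⟨M, hM0, fun x hx => (hprof x).trans (h _ (norm_pos_iff.2 hx))⟩)
  · refine ⟨fun x y hxy => ?_, Or.inl ⟨M, hM0, hc⟩⟩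
    rcases eq_or_ne x 0 with rfl | hx
    · rw [norm_zero, eq_comm, norm_eq_zero] at hxy
      rw [hxy]
    · rw [hc x hx, hc y (norm_pos_iff.1 (hxy ▸ norm_pos_iff.2 hx))]
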